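/- arXiv:1609.00170 — 3 statements merged into one kernel-verified Lean document; each statement's English description precedes it below -/
import Mathlib

section
/- Let f be analytic and univalent in the annulus A(r) = {z : r < |z| < 1}, with |f(z)| < 1 in A(r), boundary values of modulus 1 on the unit circle (i.e. |f(z)| → 1 as |z| → 1), and f(z) ≠ 0 in A(r). Then limsup_{|z|→r} |f(z)| ≤ max{2r, 4r/(1 + 4r²)} < 4r. -/
open Complex Filter

section AnnulusHelpers

open Complex Filter Set MeasureTheory

lemma log_exists {U : Set ℂ} (hU : IsOpen U) (hc : Convex ℝ U) (hn : U.Nonempty) {g : ℂ → ℂ}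
    (hg : DifferentiableOn ℂ g U) (h0 : ∀ z ∈ U, g z ≠ 0) :
    ∃ L : ℂ → ℂ, DifferentiableOn ℂ L U ∧ ∀ z ∈ U, exp (L z) = g z := by
  have : ContractibleSpace U := hc.contractibleSpace hn
  have hs : IsSimplyConnected U := by
    unfold IsSimplyConnected
    infer_instance
  obtain ⟨L, hL, he⟩ := Complex.exists_continuousOn_eqOn_exp_comp hs hU hg.continuousOn
    (by rintro ⟨z, hz, h⟩; exact h0 z hz h)
  refine ⟨L, ?_, fun z hz => he hz⟩
  intro z hz
  have hz0 : exp (L z) = g z := he hz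
  have hLz : ContinuousAt L z := hL.continuousAt (hU.mem_nhds hz)
  have hgz : DifferentiableAt ℂ g z := hg.differentiableAt (hU.mem_nhds hz)
  have h1 : DifferentiableAt ℂ (fun w => L z + log (g w / g z)) z := by
    have : g z / g z ∈ slitPlane := by rw [div_self (h0 z hz)]; exact one_mem_slitPlane
    exact ((hgz.div_const (g z)).clog this).const_add _
  have h2 : ∀ᶠ w in nhds z, L w = L z + log (g w / g z) := by
    have h3 : ∀ᶠ w in nhds z, ‖L w - L z‖ < 1 := by
      have := (hLz.sub (continuousAt_const (y := L z))).norm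
      have h4 : ‖L z - L z‖ < 1 := by simp
      exact this.eventually (gt_mem_nhds h4) |>.mono (by simp)
    filter_upwards [h3, hU.mem_nhds hz] with w hw hwU
    have hw0 : exp (L w) = g w := he hwU
    rw [← hw0, ← hz0, ← exp_sub, log_exp]
    · ring
    · have := abs_le.1 (abs_im_le_norm (L w - L z)); linarith [Real.pi_gt_three]
    · have := abs_le.1 (abs_im_le_norm (L w - L z)); linarith [Real.pi_gt_three]
  exact (h1.congr_of_eventuallyEq h2).differentiableWithinAt

lemma log_const {U : Set ℂ} (hU : IsOpen U) (hc : IsPreconnected U) {D : ℂ → ℂ}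
    (hD : DifferentiableOn ℂ D U) (h1 : ∀ z ∈ U, exp (D z) = 1) :
    ∃ k : ℤ, ∀ z ∈ U, D z = k * (2 * Real.pi * I) := by
  rcases U.eq_empty_or_nonempty with rfl | ⟨z0, hz0⟩
  · exact ⟨0, by simp⟩
  obtain ⟨k, hk⟩ := exp_eq_one_iff.1 (h1 z0 hz0)
  refine ⟨k, fun z hz => ?_⟩
  rw [← hk]
  refine hU.is_const_of_deriv_eq_zero hc hD ?_ hz hz0
  intro w hw
  have hd := (hD.differentiableAt (hU.mem_nhds hw)).hasDerivAt
  have h2 := hd.cexp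
  have h3 : HasDerivAt (fun z => exp (D z)) 0 w := by
    refine (hasDerivAt_const w (1:ℂ)).congr_of_eventuallyEq ?_
    filter_upwards [hU.mem_nhds hw] with y hy using h1 y hy
  have := h2.unique h3
  rw [h1 w hw] at this
  simpa using this

lemma area_cov {s : Set ℂ} (hs : IsOpen s) {g : ℂ → ℂ} (hg : DifferentiableOn ℂ g s)
    (hinj : InjOn g s) (w : ℂ → ENNReal) :
    ∫⁻ z in g '' s, w z = ∫⁻ z in s, ENNReal.ofReal (‖deriv g z‖ ^ 2) * w (g z) := by
  rw [lintegral_image_eq_lintegral_abs_det_fderiv_mul volume hs.measurableSet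
    (f' := fun z => (ContinuousLinearMap.toSpanSingleton ℂ (deriv g z)).restrictScalars ℝ) _ hinj]
  · refine setLIntegral_congr_fun hs.measurableSet fun z hz => ?_
    congr 2
    have : (((ContinuousLinearMap.toSpanSingleton ℂ (deriv g z)).restrictScalars ℝ : ℂ →L[ℝ] ℂ) : ℂ →ₗ[ℝ] ℂ)
      = LinearMap.mulLeft ℝ (deriv g z) := by
      ext; simp [mul_comm]
    rw [ContinuousLinearMap.det, this]
    have h := Algebra.norm_complex_apply (deriv g z)
    rw [Algebra.norm_apply] at h
    change |LinearMap.det (Algebra.lmul ℝ ℂ (deriv g z))| = _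
    rw [h, normSq_eq_norm_sq, abs_of_nonneg (by positivity)]
  · intro z hz
    have := (hg.differentiableAt (hs.mem_nhds hz)).hasDerivAt.hasFDerivAt
    exact (this.restrictScalars ℝ).hasFDerivWithinAt

lemma cos_bound {R : ℝ} (hR : 1 < R) {x y : ℝ} (hx : 0 < x) (hy : 0 < y) (hx2 : x ^ 2 = R ^ 2 - 1 / 2)
    (hy2 : y ^ 2 = R ^ 2 + 1 / 2) {ζ : ℂ} (h : ‖cos ζ‖ < R) :
    |ζ.im| < Real.log (2 * R) - Real.cos (2 * ζ.re) / (4 * x * y) := by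
  have h1 : ‖cos ζ‖ ^ 2 = Real.cos ζ.re ^ 2 + Real.sinh |ζ.im| ^ 2 := by
    have : Real.sinh |ζ.im| ^ 2 = Real.sinh ζ.im ^ 2 := by
      rcases abs_choice ζ.im with h | h <;> rw [h] <;> simp
    rw [this, ← normSq_eq_norm_sq, cos_eq, normSq_apply]
    simp only [← ofReal_cos, ← ofReal_sin, ← ofReal_cosh, ← ofReal_sinh]
    simp [-ofReal_cos, -ofReal_sin, -ofReal_cosh, -ofReal_sinh]
    have := Real.cosh_sq ζ.im
    have h2 := Real.sin_sq_add_cos_sq ζ.re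
    linear_combination Real.cos ζ.re ^ 2 * this + Real.sinh ζ.im ^ 2 * h2
  have h2 : ‖cos ζ‖ ^ 2 < R ^ 2 := by gcongr
  have hC := Real.cos_two_mul ζ.re
  set C := Real.cos (2 * ζ.re)
  set u := |ζ.im|
  have hS : Real.sinh u < x - C / (4 * x) := by
    have : x - C / (4 * x) = (2 * x ^ 2 - C / 2) / (2 * x) := by field_simp; ring
    rw [this, lt_div_iff₀ (by positivity)]
    nlinarith [sq_nonneg (Real.sinh u - x)]
  have hS' : Real.cosh u < y - C / (4 * y) := by
    have : y - C / (4 * y) = (2 * y ^ 2 - C / 2) / (2 * y) := by field_simp; ring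
    rw [this, lt_div_iff₀ (by positivity)]
    have := Real.cosh_sq u
    nlinarith [sq_nonneg (Real.cosh u - y)]
  have he : Real.exp u < (x + y) * (1 - C / (4 * x * y)) := by
    have : (x + y) * (1 - C / (4 * x * y)) = (x - C / (4 * x)) + (y - C / (4 * y)) := by
      field_simp; ring
    rw [this, ← Real.cosh_add_sinh u]; linarith
  have hpos : 0 < 1 - C / (4 * x * y) := by
    have := (Real.exp_pos u).trans he
    exact pos_of_mul_pos_right this (by positivity)
  have hxy : x + y ≤ 2 * R := by nlinarith [sq_nonneg (x - y)]
  have hlog : 1 - C / (4 * x * y) ≤ Real.exp (- (C / (4 * x * y))) := by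
    have := Real.add_one_le_exp (- (C / (4 * x * y))); linarith
  have h3 : Real.exp u < 2 * R * Real.exp (- (C / (4 * x * y))) :=
    he.trans_le (mul_le_mul hxy hlog hpos.le (by linarith))
  rw [← Real.exp_log (show 0 < 2 * R by linarith), ← Real.exp_add, Real.exp_lt_exp] at h3
  linarith

lemma cos_inj_strip {ζ ξ : ℂ} (h1 : 0 < ζ.re) (h2 : ζ.re < Real.pi) (h3 : 0 < ξ.re)
    (h4 : ξ.re < Real.pi) (h : cos ζ = cos ξ) : ζ = ξ := by
  obtain ⟨k, hk | hk⟩ := cos_eq_cos_iff.1 h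
  · have := congrArg re hk
    simp at this
    have hk0 : k = 0 := by
      have a1 : (k:ℝ) < 1 := by nlinarith [Real.pi_pos]
      have a2 : (-1:ℝ) < k := by nlinarith [Real.pi_pos]
      have : k < 1 := by exact_mod_cast a1
      have : -1 < k := by exact_mod_cast a2
      omega
    rw [hk, hk0]; simp
  · have := congrArg re hk
    simp at this
    exfalso
    have a1 : (k:ℝ) < 1 := by nlinarith [Real.pi_pos]
    have a2 : (0:ℝ) < k := by nlinarith [Real.pi_pos]
    have : k < 1 := by exact_mod_cast a1
    have : 0 < k := by exact_mod_cast a2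
    omega

lemma cos_surj_strip (w : ℂ) (hw : w.im ≠ 0) : ∃ ζ : ℂ, 0 < ζ.re ∧ ζ.re < Real.pi ∧ cos ζ = w := by
  have key : ∀ ζ : ℂ, cos ζ = w → ζ.re ≠ 0 ∧ ζ.re ≠ Real.pi := by
    intro ζ h
    constructor
    · intro h0
      apply hw
      rw [← h, cos_eq, h0]
      simp only [← ofReal_cos, ← ofReal_sin, ← ofReal_cosh, ← ofReal_sinh]
      simp
    · intro h0
      apply hw
      rw [← h, cos_eq, h0]
      simp only [← ofReal_cos, ← ofReal_sin, ← ofReal_cosh, ← ofReal_sinh]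
      simp
  obtain ⟨ζ0, h0⟩ := cos_surjective w
  obtain ⟨n, hn, -⟩ := existsUnique_add_zsmul_mem_Ioc Real.two_pi_pos ζ0.re (-Real.pi)
  set ζ1 : ℂ := ζ0 + n * (2 * Real.pi)
  have h1 : cos ζ1 = w := by rw [← h0]; exact cos_add_int_mul_two_pi ζ0 n
  have hre : ζ1.re = ζ0.re + n * (2 * Real.pi) := by simp [ζ1]
  simp only [zsmul_eq_mul] at hn
  rw [← hre] at hn
  have hn1 := hn.1
  have hn2 := hn.2
  rcases lt_trichotomy ζ1.re 0 with h | h | h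
  · refine ⟨-ζ1, by simpa using h, by simp; linarith, by rw [cos_neg, h1]⟩
  · exact absurd h (key ζ1 h1).1
  · refine ⟨ζ1, h, lt_of_le_of_ne (by linarith) (key ζ1 h1).2, h1⟩

lemma disc_area {t : ℝ} (ht : 0 < t) (ht1 : t < 1) :
    ∫⁻ w in Metric.ball (0:ℂ) 1, ENNReal.ofReal (1 / ‖w ^ 2 - t ^ 2‖)
      ≤ ENNReal.ofReal (2 * Real.pi * Real.log (2 / t)) := by
  set R : ℝ := 1 / t with hRdef
  have hR : 1 < R := by rw [hRdef, lt_div_iff₀ ht]; linarith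
  set x := √(R ^ 2 - 1 / 2)
  set y := √(R ^ 2 + 1 / 2)
  have hx : 0 < x := Real.sqrt_pos.2 (by nlinarith)
  have hy : 0 < y := Real.sqrt_pos.2 (by nlinarith)
  have hx2 : x ^ 2 = R ^ 2 - 1 / 2 := Real.sq_sqrt (by nlinarith)
  have hy2 : y ^ 2 = R ^ 2 + 1 / 2 := Real.sq_sqrt (by nlinarith)
  set b : ℝ → ℝ := fun v => Real.log (2 * R) - Real.cos (2 * v) / (4 * x * y) with hb
  have hbc : Continuous b := by fun_prop
  have hb0 : ∀ v, 0 < b v := by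
    intro v
    have h : ‖cos (v:ℂ)‖ < R := by
      rw [← ofReal_cos, norm_real]
      exact (Real.abs_cos_le_one v).trans_lt hR
    have := cos_bound hR hx hy hx2 hy2 h
    simpa [hb] using this
  set Ω : Set ℂ := {ζ | (0 < ζ.re ∧ ζ.re < Real.pi) ∧ (- b ζ.re < ζ.im ∧ ζ.im < b ζ.re)} with hΩ
  have hΩo : IsOpen Ω := by
    refine ((isOpen_lt continuous_const continuous_re).inter
      (isOpen_lt continuous_re continuous_const)).inter
      ((isOpen_lt (by fun_prop) continuous_im).inter (isOpen_lt continuous_im (by fun_prop)))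
  have hvol : volume Ω = ENNReal.ofReal (2 * Real.pi * Real.log (2 / t)) := by
    have e1 : Ω = measurableEquivRealProd ⁻¹' (regionBetween (fun v => - b v) b (Ioo 0 Real.pi)) := by
      ext ζ
      simp [hΩ, regionBetween, measurableEquivRealProd_apply]
    rw [e1, volume_preserving_equiv_real_prod.measure_preimage_equiv]
    rw [Measure.volume_eq_prod, volume_regionBetween_eq_integral]
    · congr 1
      rw [← integral_Ioc_eq_integral_Ioo, ← intervalIntegral.integral_of_le Real.pi_pos.le]
      have e2 : ∀ v, (b - fun v => - b v) v = 2 * Real.log (2 * R) - (2 / (4 * x * y)) * Real.cos (2 * v) := by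
        intro v; simp [hb]; ring
      simp only [e2]
      rw [intervalIntegral.integral_sub (by simp) (by apply Continuous.intervalIntegrable; fun_prop)]
      rw [intervalIntegral.integral_const_mul (2 / (4 * x * y)) (fun v => Real.cos (2 * v))]
      rw [intervalIntegral.integral_comp_mul_left (fun v => Real.cos v) two_ne_zero]
      simp
      rw [show 2 * R = 2 / t by rw [hRdef]; ring]
      ring
    · exact (hbc.neg.integrableOn_Icc (a := 0) (b := Real.pi)).mono_set Ioo_subset_Icc_self
    · exact (hbc.integrableOn_Icc (a := 0) (b := Real.pi)).mono_set Ioo_subset_Icc_self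
    · exact measurableSet_Ioo
    · intro v _; linarith [hb0 v]
  have ht0 : (t:ℂ) ≠ 0 := by exact_mod_cast ht.ne'
  have hinj : InjOn (fun ζ : ℂ => t * cos ζ) Ω := by
    intro ζ hζ ξ hξ h
    exact cos_inj_strip hζ.1.1 hζ.1.2 hξ.1.1 hξ.1.2 (mul_left_cancel₀ ht0 h)
  have hline : volume {w : ℂ | w.im = 0} = 0 := by
    have e1 : {w : ℂ | w.im = 0} = measurableEquivRealProd ⁻¹' (univ ×ˢ {0}) := by
      ext ζ
      simp [measurableEquivRealProd_apply]
    rw [e1, volume_preserving_equiv_real_prod.measure_preimage_equiv, Measure.volume_eq_prod,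
      Measure.prod_prod]
    simp
  have hcov : Metric.ball (0:ℂ) 1 ⊆ ((fun ζ : ℂ => t * cos ζ) '' Ω) ∪ {w : ℂ | w.im = 0} := by
    intro w hw
    by_cases him : w.im = 0
    · exact Or.inr him
    left
    obtain ⟨ζ, h1, h2, h3⟩ := cos_surj_strip (w / t) (by
      rw [div_ofReal_im]; exact div_ne_zero him ht.ne')
    refine ⟨ζ, ⟨⟨h1, h2⟩, ?_⟩, by simp only [h3]; field_simp⟩
    have h : ‖cos ζ‖ < R := by
      rw [h3, norm_div, norm_real, Real.norm_eq_abs, abs_of_pos ht, hRdef]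
      have : ‖w‖ < 1 := by simpa using hw
      gcongr
    exact abs_lt.1 (cos_bound hR hx hy hx2 hy2 h)
  calc _ ≤ ∫⁻ w in ((fun ζ : ℂ => t * cos ζ) '' Ω) ∪ {w : ℂ | w.im = 0},
          ENNReal.ofReal (1 / ‖w ^ 2 - t ^ 2‖) := lintegral_mono_set hcov
    _ ≤ (∫⁻ w in ((fun ζ : ℂ => t * cos ζ) '' Ω), ENNReal.ofReal (1 / ‖w ^ 2 - t ^ 2‖)) +
        ∫⁻ w in {w : ℂ | w.im = 0}, ENNReal.ofReal (1 / ‖w ^ 2 - t ^ 2‖) := lintegral_union_le _ _ _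
    _ = ∫⁻ w in ((fun ζ : ℂ => t * cos ζ) '' Ω), ENNReal.ofReal (1 / ‖w ^ 2 - t ^ 2‖) := by
        rw [setLIntegral_measure_zero _ _ hline, add_zero]
    _ ≤ ∫⁻ z in Ω, 1 := by
        rw [area_cov hΩo (by fun_prop) hinj]
        refine setLIntegral_mono' hΩo.measurableSet fun ζ hζ => ?_
        have hd : deriv (fun ζ : ℂ => t * cos ζ) ζ = - (t * sin ζ) := by
          rw [deriv_const_mul _ (by fun_prop)]; simp
        rw [hd, ← ENNReal.ofReal_mul (by positivity), ← ENNReal.ofReal_one]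
        apply ENNReal.ofReal_le_ofReal
        have e : ((t:ℂ) * cos ζ) ^ 2 - t ^ 2 = - (t * sin ζ) ^ 2 := by
          linear_combination (t:ℂ) ^ 2 * (sin_sq_add_cos_sq ζ)
        rw [e, norm_neg, norm_neg, norm_pow, mul_one_div]
        exact div_self_le_one _
    _ = _ := by rw [setLIntegral_one, hvol]

/-- The vertical strip `a < Re ζ < 0`. -/
def aStrip (a : ℝ) : Set ℂ := {ζ | a < ζ.re ∧ ζ.re < 0}

/-- The fundamental rectangle in the strip. -/
def aRect (a : ℝ) : Set ℂ := {ζ | (a < ζ.re ∧ ζ.re < 0) ∧ (0 < ζ.im ∧ ζ.im < 2 * Real.pi)}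

lemma aStrip_open (a : ℝ) : IsOpen (aStrip a) :=
  (isOpen_lt continuous_const continuous_re).inter (isOpen_lt continuous_re continuous_const)

lemma aRect_open (a : ℝ) : IsOpen (aRect a) :=
  ((isOpen_lt continuous_const continuous_re).inter (isOpen_lt continuous_re continuous_const)).inter
   ((isOpen_lt continuous_const continuous_im).inter (isOpen_lt continuous_im continuous_const))

lemma aStrip_convex (a : ℝ) : Convex ℝ (aStrip a) :=
  (convex_halfSpace_re_gt a).inter (convex_halfSpace_re_lt 0)

lemma aStrip_shift {a : ℝ} {ζ : ℂ} (h : ζ ∈ aStrip a) : ζ + 2 * Real.pi * I ∈ aStrip a := by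
  simpa [aStrip] using h

lemma aStrip_nonempty {a : ℝ} (ha : a < 0) : (aStrip a).Nonempty :=
  ⟨((a / 2 : ℝ) : ℂ), by simp only [aStrip, mem_ofPred_eq, ofReal_re]; constructor <;> linarith⟩

lemma log_shift {a : ℝ} {L : ℂ → ℂ} (hL : DifferentiableOn ℂ L (aStrip a))
    (hp : ∀ ζ ∈ aStrip a, exp (L (ζ + 2 * Real.pi * I)) = exp (L ζ)) :
    ∃ k : ℤ, ∀ ζ ∈ aStrip a, L (ζ + 2 * Real.pi * I) = L ζ + k * (2 * Real.pi * I) := by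
  have hd : DifferentiableOn ℂ (fun ζ => L (ζ + 2 * Real.pi * I) - L ζ) (aStrip a) := by
    refine DifferentiableOn.sub ?_ hL
    exact hL.comp (by fun_prop) (fun ζ hζ => aStrip_shift hζ)
  obtain ⟨k, hk⟩ := log_const (aStrip_open a) (aStrip_convex a).isPreconnected hd (by
    intro z hz
    rw [exp_sub, hp z hz, div_self (exp_ne_zero _)])
  exact ⟨k, fun z hz => by rw [← hk z hz]; ring⟩

lemma no_single {a : ℝ} (ha : a < 0) {N : ℂ → ℂ} (hN : DifferentiableOn ℂ N (aStrip a))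
    (hp : ∀ ζ ∈ aStrip a, N (ζ + 2 * Real.pi * I) = N ζ)
    (hneg : ∀ ζ ∈ aStrip a, (N ζ).re < 0)
    (hlim : ∀ ε > 0, ∃ δ > 0, ∀ ζ ∈ aStrip a, -δ < ζ.re → -ε < (N ζ).re) : False := by
  set J : ℝ → ℂ := fun σ => ∫ y in (0:ℝ)..(2 * Real.pi), N (σ + y * I) with hJ
  have hJc : ∀ σ τ, a < σ → σ < 0 → a < τ → τ < 0 → J σ = J τ := by
    intro σ τ h1 h2 h3 h4
    have h := integral_boundary_rect_eq_zero_of_differentiableOn N (σ : ℂ) (τ + (2 * Real.pi : ℝ) * I) (by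
      refine hN.mono fun z hz => ?_
      rw [mem_reProdIm] at hz
      have := hz.1
      simp [mem_uIcc] at this
      rcases this with h | h
      · exact ⟨by linarith, by linarith⟩
      · exact ⟨by linarith, by linarith⟩)
    have e : ∫ x in (σ:ℝ)..τ, N (x + (2 * Real.pi : ℝ) * I) = ∫ x in (σ:ℝ)..τ, N x := by
      apply intervalIntegral.integral_congr
      intro x hx
      have hx' : (x:ℂ) ∈ aStrip a := by
        rw [mem_uIcc] at hx
        simp only [aStrip, mem_ofPred_eq, ofReal_re]
        rcases hx with h | h
        · exact ⟨by linarith, by linarith⟩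
        · exact ⟨by linarith, by linarith⟩
      simpa using hp _ hx'
    simp only [ofReal_re, ofReal_im, add_re, add_im, mul_re, mul_im, I_re, I_im, mul_zero,
      mul_one, zero_mul, add_zero, zero_add, sub_zero, ofReal_zero] at h
    rw [e] at h
    simp only [sub_self, zero_add, smul_eq_mul] at h
    rw [← mul_sub] at h
    rcases mul_eq_zero.1 h with h | h
    · exact absurd h I_ne_zero
    · exact (sub_eq_zero.1 h).symm
  have hcont : ∀ σ, a < σ → σ < 0 → Continuous (fun y : ℝ => N (σ + y * I)) := by
    intro σ h1 h2
    refine hN.continuousOn.comp_continuous (by fun_prop) fun y => ?_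
    simp [aStrip, h1, h2]
  have hre : ∀ σ, a < σ → σ < 0 → (J σ).re = ∫ y in (0:ℝ)..(2 * Real.pi), (N (σ + y * I)).re := by
    intro σ h1 h2
    have := reCLM.intervalIntegral_comp_comm ((hcont σ h1 h2).intervalIntegrable (μ := volume) 0 (2 * Real.pi))
    simpa using this.symm
  have hlt : (J (a / 2)).re < 0 := by
    rw [hre _ (by linarith) (by linarith)]
    have := intervalIntegral.intervalIntegral_pos_of_pos (f := fun y : ℝ => - (N ((a/2 : ℝ) + y * I)).re)
      (a := 0) (b := 2 * Real.pi) ?_ ?_ Real.two_pi_pos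
    · rw [intervalIntegral.integral_neg] at this; linarith
    · apply Continuous.intervalIntegrable
      exact (continuous_re.comp (hcont (a/2) (by linarith) (by linarith))).neg
    · intro y
      have := hneg ((a/2 : ℝ) + y * I) (by simp [aStrip]; constructor <;> linarith)
      linarith
  set ε := - (J (a / 2)).re / (4 * Real.pi) with hε
  have hε0 : 0 < ε := by have := Real.pi_pos; rw [hε]; apply div_pos <;> linarith
  obtain ⟨δ, hδ, h⟩ := hlim ε hε0
  set σ := max (a / 2) (- δ / 2)
  have hσ0 : σ < 0 := max_lt (by linarith) (by linarith)
  have hσa : a < σ := lt_of_lt_of_le (by linarith) (le_max_left _ _)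
  have hσd : -δ < σ := lt_of_lt_of_le (by linarith) (le_max_right _ _)
  have h1 := hJc (a/2) σ (by linarith) (by linarith) hσa hσ0
  have h2 : - ε * (2 * Real.pi) ≤ (J σ).re := by
    rw [hre σ hσa hσ0]
    have e1 : ∫ y in (0:ℝ)..(2 * Real.pi), (-ε) = - ε * (2 * Real.pi) := by simp; ring
    rw [← e1]
    apply intervalIntegral.integral_mono_on Real.two_pi_pos.le (by simp)
    · exact (continuous_re.comp (hcont σ hσa hσ0)).intervalIntegrable _ _
    · intro y _
      exact (h (σ + y * I) (by simp [aStrip, hσa, hσ0]) (by simpa using hσd)).le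
  rw [← h1, hε] at h2
  have hpi := Real.pi_pos
  have : -(-(J (a / 2)).re / (4 * Real.pi)) * (2 * Real.pi) = (J (a/2)).re / 2 := by
    field_simp; ring
  linarith

lemma length_area {a : ℝ} {M : ℂ → ℂ} (hM : DifferentiableOn ℂ M (aStrip a)) {k : ℤ} (hk : k ≠ 0)
    (hs : ∀ ζ ∈ aStrip a, M (ζ + 2 * Real.pi * I) = M ζ + k * (Real.pi * I)) :
    ENNReal.ofReal (Real.pi / 2 * (- a)) ≤ ∫⁻ ζ in aRect a, ENNReal.ofReal (‖deriv M ζ‖ ^ 2) := by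
  have hdc := (hM.deriv (aStrip_open a)).continuousOn
  have key : ∀ σ ∈ Ioo a 0, ENNReal.ofReal (Real.pi / 2) ≤
      ∫⁻ y in Ioo 0 (2 * Real.pi), ENNReal.ofReal (‖deriv M ((σ:ℝ) + (y:ℝ) * I)‖ ^ 2) := by
    intro σ hσ
    have hmem : ∀ y : ℝ, (σ:ℂ) + y * I ∈ aStrip a := fun y => by simpa [aStrip] using hσ
    have hc : Continuous (fun y : ℝ => deriv M ((σ:ℝ) + (y:ℝ) * I)) :=
      hdc.comp_continuous (by fun_prop) hmem
    have hval : ∫ y in (0:ℝ)..(2 * Real.pi), deriv M ((σ:ℝ) + (y:ℝ) * I) = k * Real.pi := by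
      have h1 : ∀ y ∈ uIcc (0:ℝ) (2 * Real.pi), HasDerivAt (fun y : ℝ => M (σ + y * I) / I)
          (deriv M (σ + y * I)) y := by
        intro y _
        have h2 := (hM.differentiableAt ((aStrip_open a).mem_nhds (hmem y))).hasDerivAt
        have h3 : HasDerivAt (fun y : ℝ => (σ:ℂ) + y * I) I y := by
          have := ((hasDerivAt_id y).ofReal_comp.mul_const I).const_add (σ:ℂ)
          simpa using this
        have h4 := (h2.scomp y h3).div_const I
        simpa using h4
      rw [intervalIntegral.integral_eq_sub_of_hasDerivAt h1 (hc.intervalIntegrable _ _)]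
      have := hs σ (by simpa using hmem 0)
      simp only [ofReal_mul, ofReal_ofNat, ofReal_zero, zero_mul, add_zero, this]
      field_simp
      ring
    have hvalre : ∫ y in (0:ℝ)..(2 * Real.pi), (deriv M ((σ:ℝ) + (y:ℝ) * I)).re = k * Real.pi := by
      have h2 := reCLM.intervalIntegral_comp_comm (hc.intervalIntegrable (μ := volume) 0 (2 * Real.pi))
      simp only [reCLM_apply] at h2
      rw [h2, hval]
      simp
    have hlow : Real.pi / 2 ≤ ∫ y in (0:ℝ)..(2 * Real.pi), ‖deriv M ((σ:ℝ) + (y:ℝ) * I)‖ ^ 2 := by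
      have h1 : ∫ y in (0:ℝ)..(2 * Real.pi), ((k:ℝ) * (deriv M ((σ:ℝ) + (y:ℝ) * I)).re - k ^ 2 / 4)
          = Real.pi * k ^ 2 / 2 := by
        have hcre : Continuous (fun y : ℝ => (k:ℝ) * (deriv M ((σ:ℝ) + (y:ℝ) * I)).re) :=
          (continuous_re.comp hc).const_mul _
        rw [intervalIntegral.integral_sub (hcre.intervalIntegrable _ _)
          (continuous_const.intervalIntegrable _ _), intervalIntegral.integral_const_mul, hvalre]
        simp; ring
      have hk1 : (1:ℝ) ≤ (k:ℝ) ^ 2 := by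
        have : (1:ℤ) ≤ k ^ 2 := by have := sq_nonneg k; have := pow_ne_zero 2 hk; omega
        exact_mod_cast this
      calc Real.pi / 2 ≤ Real.pi * k ^ 2 / 2 := by nlinarith [Real.pi_pos]
        _ = _ := h1.symm
        _ ≤ _ := by
          apply intervalIntegral.integral_mono_on Real.two_pi_pos.le
          · apply Continuous.intervalIntegrable
            exact ((continuous_re.comp hc).const_mul _).sub continuous_const
          · exact (hc.norm.pow 2).intervalIntegrable _ _
          · intro y _
            have := abs_re_le_norm (deriv M ((σ:ℝ) + (y:ℝ) * I))
            have h3 : (deriv M ((σ:ℝ) + (y:ℝ) * I)).re ^ 2 ≤ ‖deriv M ((σ:ℝ) + (y:ℝ) * I)‖ ^ 2 := by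
              rw [← sq_abs]; gcongr
            nlinarith [sq_nonneg ((deriv M ((σ:ℝ) + (y:ℝ) * I)).re - k / 2)]
    rw [← ofReal_integral_eq_lintegral_ofReal]
    · apply ENNReal.ofReal_le_ofReal
      rwa [← integral_Ioc_eq_integral_Ioo, ← intervalIntegral.integral_of_le Real.two_pi_pos.le]
    · exact ((hc.norm.pow 2).integrableOn_Icc).mono_set Ioo_subset_Icc_self
    · exact Eventually.of_forall fun y => by positivity
  have e1 : aRect a = measurableEquivRealProd ⁻¹' (Ioo a 0 ×ˢ Ioo 0 (2 * Real.pi)) := by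
    ext ζ
    simp [aRect, measurableEquivRealProd_apply]
  have e2 : ∫⁻ ζ in aRect a, ENNReal.ofReal (‖deriv M ζ‖ ^ 2) =
      ∫⁻ p in (Ioo a 0 ×ˢ Ioo 0 (2 * Real.pi)), ENNReal.ofReal (‖deriv M ((p.1:ℝ) + (p.2:ℝ) * I)‖ ^ 2) := by
    rw [e1, ← volume_preserving_equiv_real_prod.setLIntegral_comp_preimage_emb
      measurableEquivRealProd.measurableEmbedding]
    simp [measurableEquivRealProd_apply]
  rw [e2, Measure.volume_eq_prod, setLIntegral_prod]
  · calc ENNReal.ofReal (Real.pi / 2 * (- a)) = ∫⁻ σ in Ioo a 0, ENNReal.ofReal (Real.pi / 2) := by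
          rw [setLIntegral_const, Real.volume_Ioo, ENNReal.ofReal_mul (by positivity)]; simp
      _ ≤ _ := setLIntegral_mono' measurableSet_Ioo key
  · apply AEMeasurable.ennreal_ofReal
    apply ContinuousOn.aemeasurable
    · apply ContinuousOn.pow
      apply ContinuousOn.norm
      refine hdc.comp (by fun_prop) ?_
      intro p hp
      simpa [aStrip] using hp.1
    · exact measurableSet_Ioo.prod measurableSet_Ioo

lemma log_near {a b : ℝ} (hab : a ≤ b) (hb : b < 0) {R : ℂ → ℂ} (hR : DifferentiableOn ℂ R (aStrip a))
    (h0 : ∀ ζ ∈ aStrip a, R ζ ≠ 0) (hp : ∀ ζ ∈ aStrip a, R (ζ + 2 * Real.pi * I) = R ζ)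
    (hs : ∀ ζ ∈ aStrip b, R ζ ∈ slitPlane) :
    ∃ E : ℂ → ℂ, DifferentiableOn ℂ E (aStrip a) ∧ (∀ ζ ∈ aStrip a, exp (E ζ) = R ζ) ∧
      (∀ ζ ∈ aStrip a, E (ζ + 2 * Real.pi * I) = E ζ) ∧ ∀ ζ ∈ aStrip b, E ζ = log (R ζ) := by
  have hsub : aStrip b ⊆ aStrip a := fun ζ h => ⟨hab.trans_lt h.1, h.2⟩
  obtain ⟨E, hE, hexp⟩ := log_exists (aStrip_open a) (aStrip_convex a)
    (aStrip_nonempty (hab.trans_lt hb)) hR h0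
  obtain ⟨j, hj⟩ := log_const (aStrip_open b) (aStrip_convex b).isPreconnected
    (D := fun ζ => E ζ - log (R ζ)) ((hE.mono hsub).sub ((hR.mono hsub).clog hs)) (by
      intro z hz
      rw [exp_sub, hexp z (hsub hz), exp_log (h0 z (hsub hz)), div_self (h0 z (hsub hz))])
  obtain ⟨k, hk⟩ := log_shift hE (fun ζ hζ => by
    rw [hexp _ (aStrip_shift hζ), hexp _ hζ, hp _ hζ])
  have hk0 : (k:ℂ) * (2 * Real.pi * I) = 0 := by
    obtain ⟨z, hz⟩ := aStrip_nonempty hb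
    have h1 := hk z (hsub hz)
    have h2 : E z - log (R z) = _ := hj z hz
    have h3 : E (z + 2 * Real.pi * I) - log (R (z + 2 * Real.pi * I)) = _ := hj _ (aStrip_shift hz)
    rw [hp z (hsub hz)] at h3
    linear_combination h3 - h2 - h1
  refine ⟨fun ζ => E ζ - j * (2 * Real.pi * I), hE.sub_const _, ?_, ?_, ?_⟩
  · intro ζ hζ
    rw [exp_sub, hexp ζ hζ, exp_int_mul_two_pi_mul_I, div_one]
  · intro ζ hζ
    simp only
    rw [hk ζ hζ, hk0, add_zero]
  · intro ζ hζ
    rw [← hj ζ hζ]; ring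

lemma strip_main {a : ℝ} (ha : a < 0) {F : ℂ → ℂ} (hF : DifferentiableOn ℂ F (aStrip a))
    (hp : ∀ ζ ∈ aStrip a, F (ζ + 2 * Real.pi * I) = F ζ)
    (hinj : InjOn F (aRect a)) (hlt : ∀ ζ ∈ aStrip a, ‖F ζ‖ < 1) (h0 : ∀ ζ ∈ aStrip a, F ζ ≠ 0)
    {t : ℝ} (ht : 0 < t) (ht1 : t < 1) (hs : ∀ ζ ∈ aStrip a, F ζ ≠ ((2 * t / (1 + t ^ 2) : ℝ) : ℂ))
    (hlim : ∀ ε > 0, ∃ δ > 0, ∀ ζ ∈ aStrip a, -δ < ζ.re → 1 - ε < ‖F ζ‖) :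
    t ≤ 2 * Real.exp a := by
  have hopen := aStrip_open a
  have hrs : aRect a ⊆ aStrip a := fun ζ h => h.1
  have htc : (t:ℂ) ≠ 0 := by exact_mod_cast ht.ne'
  have h1t : (1 - (t:ℂ) ^ 2) ≠ 0 := by
    have : (1 - t ^ 2) ≠ 0 := by nlinarith
    exact_mod_cast this
  have h1t' : (1 + (t:ℂ) ^ 2) ≠ 0 := by
    have : (1 + t ^ 2) ≠ 0 := by positivity
    exact_mod_cast this
  -- log of F
  obtain ⟨L, hL, hLe⟩ := log_exists hopen (aStrip_convex a) (aStrip_nonempty ha) hF h0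
  obtain ⟨k, hk⟩ := log_shift hL (fun ζ hζ => by
    rw [hLe _ (aStrip_shift hζ), hLe _ hζ, hp _ hζ])
  have hLre : ∀ ζ ∈ aStrip a, ‖F ζ‖ = Real.exp (L ζ).re := fun ζ hζ => by
    rw [← hLe ζ hζ, norm_exp]
  have hk0 : k ≠ 0 := by
    rintro rfl
    refine no_single ha hL (fun ζ hζ => by simpa using hk ζ hζ) ?_ ?_
    · intro ζ hζ
      have := hlt ζ hζ
      rw [hLre ζ hζ] at this
      exact Real.exp_lt_one_iff.1 this
    · intro ε hε
      obtain ⟨δ, hδ, h⟩ := hlim (1 - Real.exp (-ε)) (by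
        have := Real.exp_lt_one_iff.2 (show -ε < 0 by linarith); linarith)
      refine ⟨δ, hδ, fun ζ hζ hd => ?_⟩
      have := h ζ hζ hd
      rw [hLre ζ hζ, sub_sub_cancel, Real.exp_lt_exp] at this
      exact this
  -- Moebius
  have hd : ∀ ζ ∈ aStrip a, 1 - t * F ζ ∈ slitPlane := by
    intro ζ hζ
    left
    have h1 := (abs_re_le_norm (t * F ζ)).trans_lt (b := ‖t * F ζ‖) (c := 1) (by
      rw [norm_mul, norm_real, Real.norm_eq_abs, abs_of_pos ht]
      have := hlt ζ hζ
      nlinarith [norm_nonneg (F ζ)])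
    have := (abs_lt.1 h1).2
    simp only [sub_re, one_re]; linarith
  have hd0 : ∀ ζ ∈ aStrip a, 1 - t * F ζ ≠ 0 := fun ζ hζ => slitPlane_ne_zero (hd ζ hζ)
  set G : ℂ → ℂ := fun ζ => (F ζ - t) / (1 - t * F ζ) with hGdef
  have hG : DifferentiableOn ℂ G (aStrip a) :=
    (hF.sub_const _).div ((hF.const_mul _).const_sub _) hd0
  have hGinj : InjOn G (aRect a) := by
    intro ζ hζ ξ hξ h
    apply hinj hζ hξ
    simp only [hGdef] at h
    rw [div_eq_div_iff (hd0 ζ (hrs hζ)) (hd0 ξ (hrs hξ))] at h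
    have : (1 - (t:ℂ) ^ 2) * (F ζ - F ξ) = 0 := by linear_combination h
    rcases mul_eq_zero.1 this with h | h
    · exact absurd h h1t
    · exact sub_eq_zero.1 h
  have hG1 : ∀ ζ ∈ aStrip a, ‖G ζ‖ < 1 := by
    intro ζ hζ
    simp only [hGdef]
    rw [norm_div, div_lt_one (norm_pos_iff.2 (hd0 ζ hζ))]
    apply lt_of_pow_lt_pow_left₀ 2 (norm_nonneg _)
    have h1 : ‖F ζ‖ ^ 2 < 1 := by have := hlt ζ hζ; nlinarith [norm_nonneg (F ζ)]
    rw [← normSq_eq_norm_sq, normSq_apply] at h1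
    rw [← normSq_eq_norm_sq, ← normSq_eq_norm_sq, normSq_apply, normSq_apply]
    simp
    nlinarith [mul_pos (sub_pos.2 h1) (show 0 < 1 - t ^ 2 by nlinarith)]
  have hGp : ∀ ζ ∈ aStrip a, G ζ + t = F ζ * (1 - t ^ 2) / (1 - t * F ζ) := by
    intro ζ hζ
    have := hd0 ζ hζ
    simp only [hGdef]
    rw [div_add' _ _ _ this]
    congr 1
    ring
  set R : ℂ → ℂ := fun ζ => ((1 + t ^ 2) * F ζ - 2 * t) / ((1 - t ^ 2) * F ζ) with hRdef
  have hGm : ∀ ζ ∈ aStrip a, R ζ * (G ζ + t) = G ζ - t := by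
    intro ζ hζ
    have := hd0 ζ hζ
    have := h0 ζ hζ
    simp only [hGdef, hRdef]
    field_simp
    ring
  have hR : DifferentiableOn ℂ R (aStrip a) :=
    ((hF.const_mul _).sub_const _).div (hF.const_mul _) (fun ζ hζ => mul_ne_zero h1t (h0 ζ hζ))
  have hR0 : ∀ ζ ∈ aStrip a, R ζ ≠ 0 := by
    intro ζ hζ
    refine div_ne_zero (fun h => hs ζ hζ ?_) (mul_ne_zero h1t (h0 ζ hζ))
    push_cast
    rw [eq_div_iff h1t']
    linear_combination h
  have hR1 : ∀ ζ ∈ aStrip a, R ζ ≠ 1 := by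
    intro ζ hζ h
    have := hGm ζ hζ
    rw [h] at this
    apply htc
    linear_combination this / 2
  have hRp : ∀ ζ ∈ aStrip a, R (ζ + 2 * Real.pi * I) = R ζ := by
    intro ζ hζ; simp only [hRdef, hp ζ hζ]
  have hs1 : 2 * t / (1 + t ^ 2) < 1 := by
    rw [div_lt_one (by positivity)]; nlinarith [sq_nonneg (t - 1), sq_pos_of_pos (sub_pos.2 ht1)]
  obtain ⟨δ, hδ, hδF⟩ := hlim (1 - 2 * t / (1 + t ^ 2)) (by linarith)
  set b := max a (-δ) with hbdef
  have hab : a ≤ b := le_max_left _ _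
  have hb : b < 0 := max_lt ha (by linarith)
  have hbF : ∀ ζ ∈ aStrip b, 2 * t / (1 + t ^ 2) < ‖F ζ‖ := by
    intro ζ hζ
    have := hδF ζ ⟨hab.trans_lt hζ.1, hζ.2⟩ ((le_max_right _ _).trans_lt hζ.1)
    linarith
  have hsub : aStrip b ⊆ aStrip a := fun ζ h => ⟨hab.trans_lt h.1, h.2⟩
  have hRs : ∀ ζ ∈ aStrip b, R ζ ∈ slitPlane := by
    intro ζ hζ
    left
    have hF0 := h0 ζ (hsub hζ)
    have e : R ζ = ((1 / (1 - t ^ 2) : ℝ) : ℂ) * (((1 + t ^ 2 : ℝ) : ℂ) - 2 * t / F ζ) := by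
      simp only [hRdef]
      push_cast
      field_simp
    rw [e, re_ofReal_mul]
    apply mul_pos
    · apply one_div_pos.2; nlinarith
    · have h1 : ‖2 * t / F ζ‖ < 1 + t ^ 2 := by
        rw [norm_div, norm_mul, norm_real, Real.norm_eq_abs, abs_of_pos ht]
        have := hbF ζ hζ
        rw [div_lt_iff₀ (by positivity)] at this
        rw [div_lt_iff₀ (norm_pos_iff.2 hF0)]
        simp; linarith
      have h2 := (abs_lt.1 ((abs_re_le_norm _).trans_lt h1)).2
      rw [sub_re, ofReal_re]; linarith
  obtain ⟨E, hE, hEe, hEp, hEl⟩ := log_near hab hb hR hR0 hRp hRs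
  set η : ℂ → ℂ := fun ζ => exp (E ζ / 2) with hηdef
  have hη : DifferentiableOn ℂ η (aStrip a) := (hE.div_const 2).cexp
  have hη2 : ∀ ζ ∈ aStrip a, η ζ ^ 2 = R ζ := by
    intro ζ hζ
    rw [← hEe ζ hζ, hηdef]
    simp only
    rw [← exp_nat_mul]; congr 1; push_cast; ring
  have hη0 : ∀ ζ, η ζ ≠ 0 := fun ζ => exp_ne_zero _
  have hη1 : ∀ ζ ∈ aStrip a, 1 + η ζ ≠ 0 := by
    intro ζ hζ h
    apply hR1 ζ hζ
    rw [← hη2 ζ hζ]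
    linear_combination (η ζ - 1) * h
  have hηs : ∀ ζ ∈ aStrip b, 1 + η ζ ∈ slitPlane := by
    intro ζ hζ
    left
    have : 0 < (η ζ).re := by
      simp only [hηdef]
      rw [hEl ζ hζ, exp_re]
      apply mul_pos (Real.exp_pos _)
      apply Real.cos_pos_of_mem_Ioo
      have h1 := slitPlane_arg_ne_pi (hRs ζ hζ)
      have h2 := lt_of_le_of_ne (arg_le_pi (R ζ)) h1
      have h3 := neg_pi_lt_arg (R ζ)
      have e : (log (R ζ) / 2).im = arg (R ζ) / 2 := by
        rw [← log_im]
        simp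
      rw [e]
      constructor <;> linarith
    simp only [add_re, one_re]; linarith
  obtain ⟨Λ, hΛ, hΛe, hΛp, -⟩ := log_near hab hb (R := fun ζ => 1 + η ζ) (hη.const_add 1) hη1
    (fun ζ hζ => by simp only [hηdef, hEp ζ hζ]) hηs
  set Q : ℂ → ℂ := fun ζ => L ζ + log (1 - t ^ 2) - log (1 - t * F ζ) with hQdef
  have hQ : DifferentiableOn ℂ Q (aStrip a) :=
    (hL.add_const _).sub (((hF.const_mul _).const_sub _).clog hd)
  have hQe : ∀ ζ ∈ aStrip a, exp (Q ζ) = G ζ + t := by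
    intro ζ hζ
    simp only [hQdef]
    rw [exp_sub, exp_add, hLe ζ hζ, exp_log h1t, exp_log (hd0 ζ hζ), hGp ζ hζ]
  have hGt0 : ∀ ζ ∈ aStrip a, G ζ + t ≠ 0 := fun ζ hζ => by
    rw [← hQe ζ hζ]; exact exp_ne_zero _
  set M : ℂ → ℂ := fun ζ => Q ζ / 2 + Λ ζ with hMdef
  have hM : DifferentiableOn ℂ M (aStrip a) := (hQ.div_const 2).add hΛ
  have hMs : ∀ ζ ∈ aStrip a, M (ζ + 2 * Real.pi * I) = M ζ + k * (Real.pi * I) := by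
    intro ζ hζ
    simp only [hMdef, hQdef, hΛp ζ hζ, hp ζ hζ, hk ζ hζ]
    ring
  have hMd : ∀ ζ ∈ aStrip a, deriv M ζ = deriv G ζ / (2 * (G ζ + t) * η ζ) := by
    intro ζ hζ
    have hn := hopen.mem_nhds hζ
    have dG := (hG.differentiableAt hn).hasDerivAt
    have dQ := (hQ.differentiableAt hn).hasDerivAt
    have dη := (hη.differentiableAt hn).hasDerivAt
    have dΛ := (hΛ.differentiableAt hn).hasDerivAt
    have e1 : deriv M ζ = deriv Q ζ / 2 + deriv Λ ζ := ((dQ.div_const 2).add dΛ).deriv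
    have e2 : exp (Q ζ) * deriv Q ζ = deriv G ζ := by
      refine dQ.cexp.unique ((dG.add_const (t:ℂ)).congr_of_eventuallyEq ?_)
      filter_upwards [hn] with y hy using hQe y hy
    have e3 : exp (Λ ζ) * deriv Λ ζ = deriv η ζ := by
      refine dΛ.cexp.unique ((dη.const_add (1:ℂ)).congr_of_eventuallyEq ?_)
      filter_upwards [hn] with y hy using hΛe y hy
    have e4 := ((dη.pow 2).mul (dG.add_const (t:ℂ))).unique ((dG.sub_const (t:ℂ)).congr_of_eventuallyEq (by
      filter_upwards [hn] with y hy
      have := hGm y hy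
      rw [← hη2 y hy] at this
      simpa using this))
    rw [hQe ζ hζ] at e2
    rw [hΛe ζ hζ] at e3
    simp at e4
    have n1 := hGt0 ζ hζ
    have n2 := hη0 ζ
    have n3 := hη1 ζ hζ
    have e2' : deriv Q ζ = deriv G ζ / (G ζ + t) := by rw [eq_div_iff n1]; linear_combination e2
    have e4' : deriv η ζ = deriv G ζ * (1 - η ζ ^ 2) / (2 * η ζ * (G ζ + t)) := by
      rw [eq_div_iff (by simp [n1, n2])]; linear_combination e4
    have e3' : deriv Λ ζ = deriv G ζ * (1 - η ζ) / (2 * η ζ * (G ζ + t)) := by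
      have : deriv Λ ζ = deriv η ζ / (1 + η ζ) := by rw [eq_div_iff n3]; linear_combination e3
      rw [this, e4']
      field_simp
      ring
    rw [e1, e2', e3']
    field_simp
    ring
  have hMn : ∀ ζ ∈ aRect a, ENNReal.ofReal (‖deriv M ζ‖ ^ 2) = ENNReal.ofReal (‖deriv G ζ‖ ^ 2) *
      (ENNReal.ofReal (1 / 4) * ENNReal.ofReal (1 / ‖G ζ ^ 2 - t ^ 2‖)) := by
    intro ζ hζ
    have hζ' := hrs hζ
    rw [← ENNReal.ofReal_mul (by positivity), ← ENNReal.ofReal_mul (by positivity), hMd ζ hζ']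
    congr 1
    have e : G ζ ^ 2 - t ^ 2 = ((G ζ + t) * η ζ) ^ 2 := by
      rw [mul_pow, hη2 ζ hζ']
      linear_combination - (G ζ + t) * hGm ζ hζ'
    rw [e]
    simp only [norm_div, norm_mul, norm_pow, div_pow, mul_pow]
    have n1 := norm_pos_iff.2 (hGt0 ζ hζ')
    have n2 := norm_pos_iff.2 (hη0 ζ)
    norm_num
    field_simp
  have h1 := length_area hM hk0 hMs
  rw [setLIntegral_congr_fun (aRect_open a).measurableSet hMn] at h1
  rw [← area_cov (aRect_open a) (hG.mono hrs) hGinj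
    (fun w => ENNReal.ofReal (1 / 4) * ENNReal.ofReal (1 / ‖w ^ 2 - t ^ 2‖))] at h1
  have h2 : G '' aRect a ⊆ Metric.ball (0:ℂ) 1 := by
    rintro _ ⟨ζ, hζ, rfl⟩
    simpa using hG1 ζ (hrs hζ)
  have hlog : 0 < Real.log (2 / t) := Real.log_pos (by rw [lt_div_iff₀ ht]; linarith)
  have h3 : ENNReal.ofReal (Real.pi / 2 * (-a)) ≤
      ENNReal.ofReal (1 / 4 * (2 * Real.pi * Real.log (2 / t))) := by
    refine h1.trans ((lintegral_mono_set h2).trans ?_)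
    rw [lintegral_const_mul' _ _ ENNReal.ofReal_ne_top, ENNReal.ofReal_mul (by norm_num)]
    gcongr
    exact disc_area ht ht1
  have hpi := Real.pi_pos
  rw [ENNReal.ofReal_le_ofReal_iff (by positivity)] at h3
  have h4 : -a ≤ Real.log (2 / t) := by
    have : Real.pi / 2 * (-a) ≤ Real.pi / 2 * Real.log (2 / t) := by linarith
    exact le_of_mul_le_mul_left this (by positivity)
  rw [Real.le_log_iff_exp_le (by positivity), Real.exp_neg, le_div_iff₀ ht,
    inv_mul_le_iff₀ (Real.exp_pos a)] at h4
  linarith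

lemma exp_inj_rect {a : ℝ} {ζ ξ : ℂ} (h1 : ζ ∈ aRect a) (h2 : ξ ∈ aRect a) (h : exp ζ = exp ξ) :
    ζ = ξ := by
  obtain ⟨n, hn⟩ := exp_eq_exp_iff_exists_int.1 h
  have h3 := congrArg im hn
  simp at h3
  have hpi := Real.pi_pos
  have a1 : (n:ℝ) < 1 := by nlinarith [h1.2.1, h1.2.2, h2.2.1, h2.2.2]
  have a2 : (-1:ℝ) < n := by nlinarith [h1.2.1, h1.2.2, h2.2.1, h2.2.2]
  have : n < 1 := by exact_mod_cast a1
  have : -1 < n := by exact_mod_cast a2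
  have : n = 0 := by omega
  rw [hn, this]; simp

lemma annulus_omit {r : ℝ} (hr : 0 < r) (hr1 : r < 1 / 2) {f : ℂ → ℂ}
    (hf : DifferentiableOn ℂ f {z : ℂ | r < ‖z‖ ∧ ‖z‖ < 1})
    (hinj : InjOn f {z : ℂ | r < ‖z‖ ∧ ‖z‖ < 1})
    (hlt : ∀ z : ℂ, r < ‖z‖ → ‖z‖ < 1 → ‖f z‖ < 1)
    (hne : ∀ z : ℂ, r < ‖z‖ → ‖z‖ < 1 → f z ≠ 0)
    (hbd : ∀ ε > 0, ∃ δ > 0, ∀ z : ℂ, r < ‖z‖ → ‖z‖ < 1 → 1 - δ < ‖z‖ → 1 - ε < ‖f z‖)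
    {w : ℂ} (hw0 : w ≠ 0) (hw1 : ‖w‖ < 1) (hw : ∀ z : ℂ, r < ‖z‖ → ‖z‖ < 1 → f z ≠ w) :
    ‖w‖ ≤ 4 * r / (1 + 4 * r ^ 2) := by
  have hn := norm_pos_iff.2 hw0
  set s := ‖w‖ with hs
  set q := √(1 - s ^ 2) with hq
  have hq2 : q ^ 2 = 1 - s ^ 2 := Real.sq_sqrt (by nlinarith)
  have hq0 : 0 < q := Real.sqrt_pos.2 (by nlinarith)
  set t := s / (1 + q) with ht
  have ht0 : 0 < t := by positivity
  have ht1 : t < 1 := by rw [ht, div_lt_one (by positivity)]; linarith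
  have hst : 2 * t / (1 + t ^ 2) = s := by
    rw [ht]
    have : (1 + q) ^ 2 + s ^ 2 = 2 * (1 + q) := by nlinarith
    field_simp
    rw [this]
  set a := Real.log r with ha
  have ha0 : a < 0 := Real.log_neg hr (by linarith)
  have hex : Real.exp a = r := Real.exp_log hr
  have hmem : ∀ ζ ∈ aStrip a, r < ‖exp ζ‖ ∧ ‖exp ζ‖ < 1 := by
    intro ζ hζ
    rw [norm_exp, ← hex]
    exact ⟨Real.exp_lt_exp.2 hζ.1, Real.exp_lt_one_iff.2 hζ.2⟩
  set c : ℂ := s / w with hc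
  have hc0 : c ≠ 0 := div_ne_zero (by exact_mod_cast hn.ne') hw0
  have hcn : ‖c‖ = 1 := by
    rw [hc, norm_div, norm_real, Real.norm_eq_abs, abs_of_pos hn, div_self hn.ne']
  have hcw : c * w = s := div_mul_cancel₀ _ hw0
  have key := strip_main ha0 (F := fun ζ => c * f (exp ζ)) (t := t)
    ((hf.comp (differentiable_exp.differentiableOn) hmem).const_mul c)
    (fun ζ hζ => by simp only [exp_add, exp_two_pi_mul_I, mul_one])
    (fun ζ hζ ξ hξ h => by
      have h1 := mul_left_cancel₀ hc0 h
      exact exp_inj_rect hζ hξ (hinj (hmem ζ hζ.1) (hmem ξ hξ.1) h1))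
    (fun ζ hζ => by
      rw [norm_mul, hcn, one_mul]; exact hlt _ (hmem ζ hζ).1 (hmem ζ hζ).2)
    (fun ζ hζ => mul_ne_zero hc0 (hne _ (hmem ζ hζ).1 (hmem ζ hζ).2))
    ht0 ht1
    (fun ζ hζ h => by
      rw [hst, ← hcw] at h
      exact hw _ (hmem ζ hζ).1 (hmem ζ hζ).2 (mul_left_cancel₀ hc0 h))
    (fun ε hε => by
      obtain ⟨δ, hδ, h⟩ := hbd ε hε
      refine ⟨δ, hδ, fun ζ hζ hd => ?_⟩
      rw [norm_mul, hcn, one_mul]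
      refine h _ (hmem ζ hζ).1 (hmem ζ hζ).2 ?_
      rw [norm_exp]
      have := Real.add_one_le_exp ζ.re
      linarith)
  rw [hex] at key
  rw [← hst, div_le_div_iff₀ (by positivity) (by positivity)]
  have h1 : 0 ≤ (2 * r - t) * (1 - 2 * r * t) := by
    apply mul_nonneg (by linarith)
    nlinarith
  nlinarith

lemma cluster_omit {r : ℝ} {A : Set ℂ} (hA : A = {z : ℂ | r < ‖z‖ ∧ ‖z‖ < 1}) {f : ℂ → ℂ}
    (hf : DifferentiableOn ℂ f A) (hinj : InjOn f A) {w : ℂ}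
    (hw : MapClusterPt w (Filter.principal A ⊓ Filter.comap (fun z : ℂ => ‖z‖) (nhds r)) f) :
    ∀ z ∈ A, f z ≠ w := by
  rintro z0 hz0 rfl
  have hAo : IsOpen A := by
    rw [hA]
    exact (isOpen_lt continuous_const continuous_norm).inter (isOpen_lt continuous_norm continuous_const)
  have hz0' : r < ‖z0‖ := by rw [hA] at hz0; exact hz0.1
  set m := (r + ‖z0‖) / 2 with hm
  have hV : A ∩ {z : ℂ | m < ‖z‖} ∈ nhds z0 := by
    refine (hAo.inter (isOpen_lt continuous_const continuous_norm)).mem_nhds ⟨hz0, ?_⟩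
    change m < ‖z0‖
    linarith
  have himg : f '' (A ∩ {z : ℂ | m < ‖z‖}) ∈ nhds (f z0) := by
    rcases (hf.analyticAt (hAo.mem_nhds hz0)).eventually_constant_or_nhds_le_map_nhds with h | h
    · exfalso
      have h1 : ∀ᶠ z in nhds z0, z = z0 := by
        filter_upwards [h, hAo.mem_nhds hz0] with z hz hzA using hinj hzA hz0 hz
      have h2 : ∀ᶠ z in nhdsWithin z0 {z0}ᶜ, z = z0 := h1.filter_mono nhdsWithin_le_nhds
      have h3 : ∀ᶠ z in nhdsWithin z0 {z0}ᶜ, z ∈ ({z0}ᶜ : Set ℂ) := eventually_mem_nhdsWithin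
      obtain ⟨z, hz, hz'⟩ := (h2.and h3).exists
      exact hz' hz
    · exact h (image_mem_map hV)
  have h1 := (mapClusterPt_iff_frequently.1 hw) _ himg
  have h2 : ∀ᶠ z in (Filter.principal A ⊓ Filter.comap (fun z : ℂ => ‖z‖) (nhds r)), z ∈ A ∧ ‖z‖ < m := by
    refine Filter.Eventually.and ?_ ?_
    · exact Filter.mem_inf_of_left (Filter.mem_principal_self A)
    · exact Filter.mem_inf_of_right (Filter.preimage_mem_comap (gt_mem_nhds (by linarith)))
  obtain ⟨z, ⟨v, hv, hvz⟩, hz⟩ := (h1.and_eventually h2).exists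
  have := hinj hv.1 hz.1 hvz
  rw [this] at hv
  exact lt_asymm hv.2 hz.2

lemma near_iff {r ρ : ℝ} {A : Set ℂ} (hA : A = {z : ℂ | r < ‖z‖ ∧ ‖z‖ < 1}) {P : ℂ → Prop} :
    (∀ᶠ z in Filter.principal A ⊓ Filter.comap (fun z : ℂ => ‖z‖) (nhds ρ), P z) ↔
      ∃ δ > 0, ∀ z : ℂ, r < ‖z‖ → ‖z‖ < 1 → |‖z‖ - ρ| < δ → P z := by
  rw [inf_comm, eventually_inf_principal, eventually_comap, Metric.eventually_nhds_iff]
  simp only [hA, Real.dist_eq]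
  constructor
  · rintro ⟨δ, hδ, h⟩
    exact ⟨δ, hδ, fun z h1 h2 h3 => h h3 z rfl ⟨h1, h2⟩⟩
  · rintro ⟨δ, hδ, h⟩
    refine ⟨δ, hδ, ?_⟩
    rintro y hy z rfl hz
    exact h z hz.1 hz.2 hy

lemma annulus_preconn {r R : ℝ} (hr : 0 < r) (hR : 0 < R) : IsPreconnected {z : ℂ | r < ‖z‖ ∧ ‖z‖ < R} := by
  have h1 : Convex ℝ {ζ : ℂ | Real.log r < ζ.re ∧ ζ.re < Real.log R} :=
    (convex_halfSpace_re_gt _).inter (convex_halfSpace_re_lt _)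
  have h2 := h1.isPreconnected.image exp continuous_exp.continuousOn
  convert h2 using 1
  ext z
  constructor
  · rintro ⟨h3, h4⟩
    have hz : 0 < ‖z‖ := hr.trans h3
    refine ⟨log z, ⟨?_, ?_⟩, exp_log (norm_pos_iff.1 hz)⟩
    · rw [log_re]; exact Real.log_lt_log hr h3
    · rw [log_re]; exact Real.log_lt_log hz h4
  · rintro ⟨ζ, ⟨h3, h4⟩, rfl⟩
    refine ⟨?_, ?_⟩
    · rw [norm_exp, ← Real.log_lt_iff_lt_exp hr]; exact h3
    · rw [norm_exp, ← Real.lt_log_iff_exp_lt hR]; exact h4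

lemma min_mod {r : ℝ} (hr : 0 < r) {f : ℂ → ℂ} (hf : DifferentiableOn ℂ f {z : ℂ | r < ‖z‖ ∧ ‖z‖ < 1})
    (hne : ∀ z : ℂ, r < ‖z‖ → ‖z‖ < 1 → f z ≠ 0) {r1 r2 d : ℝ} (hd : 0 < d) (h1 : r < r1) (h2 : r2 < 1)
    (hb1 : ∀ z : ℂ, ‖z‖ = r1 → d ≤ ‖f z‖) (hb2 : ∀ z : ℂ, ‖z‖ = r2 → d ≤ ‖f z‖) {z0 : ℂ}
    (hz1 : r1 < ‖z0‖) (hz2 : ‖z0‖ < r2) : d ≤ ‖f z0‖ := by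
  set U : Set ℂ := {z : ℂ | r1 < ‖z‖ ∧ ‖z‖ < r2} with hU
  have hUo : IsOpen U :=
    (isOpen_lt continuous_const continuous_norm).inter (isOpen_lt continuous_norm continuous_const)
  have hcl : closure U ⊆ {z : ℂ | r1 ≤ ‖z‖ ∧ ‖z‖ ≤ r2} := by
    refine closure_minimal (fun z hz => ⟨hz.1.le, hz.2.le⟩) ?_
    exact (isClosed_le continuous_const continuous_norm).inter (isClosed_le continuous_norm continuous_const)
  have hsub : closure U ⊆ {z : ℂ | r < ‖z‖ ∧ ‖z‖ < 1} := fun z hz =>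
    ⟨h1.trans_le (hcl hz).1, (hcl hz).2.trans_lt h2⟩
  have hbdd : Bornology.IsBounded U := by
    refine Metric.isBounded_ball (x := (0:ℂ)) (r := r2) |>.subset ?_
    intro z hz
    rw [mem_ball_zero_iff]
    exact hz.2
  have hg : DiffContOnCl ℂ (fun z => (f z)⁻¹) U := by
    apply DifferentiableOn.diffContOnCl
    exact (hf.mono hsub).inv (fun z hz => hne z (hsub hz).1 (hsub hz).2)
  have hfr : ∀ z ∈ frontier U, ‖(f z)⁻¹‖ ≤ d⁻¹ := by
    intro z hz
    have hc := hcl hz.1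
    have hn : z ∉ U := by
      have := hz.2
      rwa [hUo.interior_eq] at this
    have hq : d ≤ ‖f z‖ := by
      rcases hc.1.eq_or_lt with h | h
      · exact hb1 z h.symm
      rcases hc.2.eq_or_lt with h' | h'
      · exact hb2 z h'
      exact absurd ⟨h, h'⟩ hn
    rw [norm_inv]
    exact inv_anti₀ hd hq
  have hz : z0 ∈ U := ⟨hz1, hz2⟩
  have := Complex.norm_le_of_forall_mem_frontier_norm_le hbdd hg hfr (subset_closure hz)
  rw [norm_inv] at this
  have hp : 0 < ‖f z0‖ := norm_pos_iff.2 (hne z0 (h1.trans hz1) (hz2.trans h2))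
  exact (inv_le_inv₀ hp hd).1 this

lemma final_bound {r : ℝ} (hr : 0 < r) (hr1 : r < 1 / 2)
    {A : Set ℂ} (hA : A = {z : ℂ | r < ‖z‖ ∧ ‖z‖ < 1})
    {f : ℂ → ℂ}
    (hf : DifferentiableOn ℂ f A)
    (hinj : Set.InjOn f A)
    (hlt : ∀ z ∈ A, ‖f z‖ < 1)
    (hne : ∀ z ∈ A, f z ≠ 0)
    (hbd : Tendsto (fun z => ‖f z‖) (Filter.principal A ⊓ Filter.comap (fun z : ℂ => ‖z‖) (nhds 1)) (nhds 1))
    {c : ℝ} (hc : 4 * r / (1 + 4 * r ^ 2) < c) (hc1 : c < 1)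
    (hfreq : ∃ᶠ z in (Filter.principal A ⊓ Filter.comap (fun z : ℂ => ‖z‖) (nhds r)), c < ‖f z‖) :
    False := by
  have hbd' : ∀ ε > 0, ∃ δ > 0, ∀ z : ℂ, r < ‖z‖ → ‖z‖ < 1 → 1 - δ < ‖z‖ → 1 - ε < ‖f z‖ := by
    intro ε hε
    obtain ⟨δ, hδ, h⟩ := (near_iff hA).1 (hbd.eventually (lt_mem_nhds (show 1 - ε < 1 by linarith)))
    refine ⟨δ, hδ, fun z h1 h2 h3 => h z h1 h2 ?_⟩
    rw [abs_lt]; constructor <;> linarith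
  have hc0 : 0 < c := lt_of_le_of_lt (by positivity) hc
  have hmem : ∀ z : ℂ, r < ‖z‖ → ‖z‖ < 1 → z ∈ A := fun z h1 h2 => by rw [hA]; exact ⟨h1, h2⟩
  set z0 : ℂ := (((r + 1) / 2 : ℝ) : ℂ) with hz0
  have hz0n : ‖z0‖ = (r + 1) / 2 := by
    rw [hz0, Complex.norm_real, Real.norm_of_nonneg (by linarith)]
  have hz0A : z0 ∈ A := hmem _ (by linarith) (by linarith)
  have hf0 := hlt z0 hz0A
  set d := max c ((‖f z0‖ + 1) / 2) with hd
  have hd1 : d < 1 := max_lt hc1 (by linarith)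
  have hdc : c ≤ d := le_max_left _ _
  have hdf : ‖f z0‖ < d := lt_of_lt_of_le (by linarith) (le_max_right _ _)
  by_cases hmid : ∃ᶠ z in (Filter.principal A ⊓ Filter.comap (fun z : ℂ => ‖z‖) (nhds r)),
      f z ∈ {w : ℂ | c ≤ ‖w‖ ∧ ‖w‖ ≤ d}
  · have hK : IsCompact {w : ℂ | c ≤ ‖w‖ ∧ ‖w‖ ≤ d} := by
      refine (isCompact_closedBall (0:ℂ) d).of_isClosed_subset ?_ ?_
      · exact (isClosed_le continuous_const continuous_norm).inter (isClosed_le continuous_norm continuous_const)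
      · intro w hw
        rw [mem_closedBall_zero_iff]
        exact hw.2
    obtain ⟨w, hw, hwc⟩ := hK.exists_mapClusterPt_of_frequently hmid
    have hom := cluster_omit hA hf hinj hwc
    have hw0 : w ≠ 0 := norm_pos_iff.1 (hc0.trans_le hw.1)
    have := annulus_omit hr hr1 (f := f) (hA ▸ hf) (hA ▸ hinj) (fun z h1 h2 => hlt z (hmem z h1 h2))
      (fun z h1 h2 => hne z (hmem z h1 h2)) hbd' hw0 (hw.2.trans_lt hd1)
      (fun z h1 h2 => hom z (hmem z h1 h2))
    linarith [hw.1]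
  · rw [not_frequently] at hmid
    obtain ⟨δ, hδ, hδ'⟩ := (near_iff hA).1 hmid
    set R := min (r + δ) 1 with hR
    have hRr : r < R := lt_min (by linarith) (by linarith)
    have hR1 : R ≤ 1 := min_le_right _ _
    have hRd : R ≤ r + δ := min_le_left _ _
    have hno : ∀ z : ℂ, r < ‖z‖ → ‖z‖ < R → ¬ (c ≤ ‖f z‖ ∧ ‖f z‖ ≤ d) := by
      intro z h1 h2
      exact hδ' z h1 (h2.trans_le hR1) (by rw [abs_lt]; constructor <;> linarith)
    have hev : ∀ᶠ z in (Filter.principal A ⊓ Filter.comap (fun z : ℂ => ‖z‖) (nhds r)),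
        r < ‖z‖ ∧ ‖z‖ < R := by
      rw [near_iff hA]
      refine ⟨R - r, by linarith, fun z h1 h2 h3 => ⟨h1, ?_⟩⟩
      rw [abs_lt] at h3
      linarith [h3.2]
    obtain ⟨z1, hz1c, hz1⟩ := (hfreq.and_eventually hev).exists
    have hz1d : d < ‖f z1‖ := by
      by_contra h
      exact hno z1 hz1.1 hz1.2 ⟨hz1c.le, not_lt.1 h⟩
    have hpre := annulus_preconn (R := R) hr (hr.trans hRr)
    have hcont : ContinuousOn (fun z => ‖f z‖) {z : ℂ | r < ‖z‖ ∧ ‖z‖ < R} :=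
      (hf.continuousOn.mono (fun z hz => hmem z hz.1 (hz.2.trans_le hR1))).norm
    have hall : ∀ z : ℂ, r < ‖z‖ → ‖z‖ < R → d < ‖f z‖ := by
      intro z h1 h2
      by_contra hcon
      have hlc : ‖f z‖ < c := by
        by_contra h
        exact hno z h1 h2 ⟨not_lt.1 h, not_lt.1 hcon⟩
      obtain ⟨y, hy, hyc⟩ := hpre.intermediate_value ⟨h1, h2⟩ hz1 hcont ⟨hlc.le, hz1c.le⟩
      have hyc' : ‖f y‖ = c := hyc
      exact hno y hy.1 hy.2 ⟨hyc'.ge, hyc'.le.trans hdc⟩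
    obtain ⟨η, hη, hη'⟩ := hbd' (1 - d) (by linarith)
    have hm1 : r < min R ((r + 1) / 2) := lt_min hRr (by linarith)
    obtain ⟨r1, hr1a, hr1b⟩ := exists_between hm1
    have hm2 : max (1 - η) ((r + 1) / 2) < 1 := max_lt (by linarith) (by linarith)
    obtain ⟨r2, hr2a, hr2b⟩ := exists_between hm2
    rw [lt_min_iff] at hr1b
    rw [max_lt_iff] at hr2a
    have := min_mod hr (f := f) (hA ▸ hf) (fun z h1 h2 => hne z (hmem z h1 h2)) (d := d)
      (hc0.trans_le hdc) hr1a hr2b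
      (fun z hz => (hall z (by linarith) (by linarith)).le)
      (fun z hz => by
        have := hη' z (by linarith) (by linarith) (by linarith)
        linarith) (z0 := z0) (by linarith) (by linarith)
    linarith

end AnnulusHelpers

/-- The annulus lemma: a univalent analytic map of the annulus `A(r)` into the
punctured unit disk with unimodular boundary values on the unit circle satisfies
`limsup_{|z|→r} |f z| ≤ max (2r) (4r/(1+4r²)) < 4r`. -/
theorem annulus_lemma (r : ℝ) (hr : r ∈ Set.Ioo (0:ℝ) 1)
    (A : Set ℂ) (hA : A = {z : ℂ | r < ‖z‖ ∧ ‖z‖ < 1})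
    (f : ℂ → ℂ)
    (hf : DifferentiableOn ℂ f A)
    (hinj : Set.InjOn f A)
    (hlt : ∀ z ∈ A, ‖f z‖ < 1)
    (hne : ∀ z ∈ A, f z ≠ 0)
    (hbd : Tendsto (fun z => ‖f z‖) (Filter.principal A ⊓ Filter.comap (fun z : ℂ => ‖z‖) (nhds 1)) (nhds 1)) :
    Filter.limsup (fun z => ‖f z‖)
        (Filter.principal A ⊓ Filter.comap (fun z : ℂ => ‖z‖) (nhds r))
      ≤ max (2 * r) (4 * r / (1 + 4 * r ^ 2)) ∧
    max (2 * r) (4 * r / (1 + 4 * r ^ 2)) < 4 * r := by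
  obtain ⟨hr0, hr1⟩ := hr
  refine ⟨?_, ?_⟩
  · have hNB : (Filter.principal A ⊓ Filter.comap (fun z : ℂ => ‖z‖) (nhds r)).NeBot := by
      refine ⟨fun hbot => ?_⟩
      have hF : ∀ᶠ _z in Filter.principal A ⊓ Filter.comap (fun z : ℂ => ‖z‖) (nhds r), False := by
        rw [hbot]; exact Filter.eventually_bot
      obtain ⟨δ, hδ, h⟩ := (near_iff hA).1 hF
      have hm : r < min (r + δ) 1 := lt_min (by linarith) hr1
      obtain ⟨t, ht1, ht2⟩ := exists_between hm
      rw [lt_min_iff] at ht2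
      have hn : ‖(t : ℂ)‖ = t := by
        rw [Complex.norm_real, Real.norm_of_nonneg (by linarith)]
      refine h (t : ℂ) (by rw [hn]; exact ht1) (by rw [hn]; exact ht2.2) ?_
      rw [hn, abs_lt]; constructor <;> linarith
    have hev : ∀ᶠ z in Filter.principal A ⊓ Filter.comap (fun z : ℂ => ‖z‖) (nhds r), z ∈ A :=
      Filter.mem_inf_of_left (Filter.mem_principal_self A)
    have hcob : Filter.IsCoboundedUnder (· ≤ ·)
        (Filter.principal A ⊓ Filter.comap (fun z : ℂ => ‖z‖) (nhds r)) (fun z => ‖f z‖) := by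
      refine Filter.IsBoundedUnder.isCoboundedUnder_le ?_
      exact Filter.isBoundedUnder_of ⟨0, fun x => norm_nonneg (f x)⟩
    rcases le_or_gt (1 / 2) r with h | h
    · refine le_trans ?_ (le_max_left _ _)
      refine Filter.limsup_le_of_le hcob ?_
      filter_upwards [hev] with z hz
      linarith [hlt z hz]
    · refine le_trans ?_ (le_max_right _ _)
      by_contra hcon
      rw [not_le] at hcon
      have hs1 : 4 * r / (1 + 4 * r ^ 2) < 1 := by
        rw [div_lt_one (by positivity)]
        nlinarith [sq_pos_of_pos (show 0 < 1 - 2 * r by linarith)]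
      obtain ⟨c, hc1, hc2⟩ := exists_between (lt_min hcon hs1)
      rw [lt_min_iff] at hc2
      exact final_bound hr0 h hA hf hinj hlt hne hbd hc1 hc2.2
        (Filter.frequently_lt_of_lt_limsup hcob hc2.1)
  · refine max_lt (by linarith) ?_
    rw [div_lt_iff₀ (by positivity)]
    nlinarith [pow_pos hr0 3]
end

section
/- L_n > 1/4^n for all n ≥ 2: for every finite Blaschke product B of degree n with B(0) = 0 and B'(0) ≠ 0, there exists a critical point ζ of B in the unit disk with |B(ζ)/(ζ B'(0))| > 1/4^n. -/
open Complex

/-- Chebyshev: no `r * ∏ (r - α k)` is bounded by `(d/4)^(m+1)` on `[0,d)`. -/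
lemma cheb_aux (m : ℕ) (α : Fin m → ℝ) (d : ℝ) (hd : 0 < d)
    (h : ∀ r, 0 ≤ r → r < d → |r * ∏ k, (r - α k)| ≤ (d / 4) ^ (m + 1)) : False := by
  have h' : ∀ r ∈ Set.Icc 0 d, |r * ∏ k, (r - α k)| ≤ (d / 4) ^ (m + 1) := by
    have hcl : IsClosed {r : ℝ | |r * ∏ k, (r - α k)| ≤ (d / 4) ^ (m + 1)} :=
      isClosed_le (by fun_prop) (by fun_prop)
    have : closure (Set.Ico 0 d) ⊆ {r : ℝ | |r * ∏ k, (r - α k)| ≤ (d / 4) ^ (m + 1)} :=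
      closure_minimal (fun r hr => h r hr.1 hr.2) hcl
    rwa [closure_Ico hd.ne] at this
  let M : Polynomial ℝ := (Polynomial.X - Polynomial.C (-1)) *
    ∏ k, (Polynomial.X - Polynomial.C (2 * α k / d - 1))
  have hM : M.Monic := (Polynomial.monic_X_sub_C _).mul
    (Polynomial.monic_prod_of_monic _ _ fun k _ => Polynomial.monic_X_sub_C _)
  have hMd : M.natDegree = m + 1 := by
    rw [Polynomial.Monic.natDegree_mul (Polynomial.monic_X_sub_C _)
      (Polynomial.monic_prod_of_monic _ _ fun k _ => Polynomial.monic_X_sub_C _),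
      Polynomial.natDegree_X_sub_C, Polynomial.natDegree_prod_of_monic _ _
        (fun k _ => Polynomial.monic_X_sub_C _)]
    simp only [Polynomial.natDegree_X_sub_C, Finset.sum_const, Finset.card_univ, Fintype.card_fin, smul_eq_mul, mul_one]
    exact add_comm _ _
  let P : Polynomial ℝ := Polynomial.C (2 ^ (m + 1)) * M
  have hc : P.coeff (m + 1) = 2 ^ (m + 1) := by
    have := hM.coeff_natDegree
    rw [hMd] at this
    show (Polynomial.C (2 ^ (m + 1)) * M).coeff (m + 1) = 2 ^ (m + 1)
    rw [Polynomial.coeff_C_mul, this, mul_one]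
  have hdeg : P.degree ≤ ((m + 1 : ℕ) : WithBot ℕ) := by
    apply Polynomial.degree_le_of_natDegree_le
    exact (Polynomial.natDegree_C_mul_le _ _).trans hMd.le
  have := Polynomial.Chebyshev.coeff_le_of_forall_abs_le_one hdeg ?_
  · rw [hc, pow_succ] at this
    have h2 : (0:ℝ) < 2 ^ m := by positivity
    rw [Nat.add_sub_cancel] at this
    linarith
  · intro x hx
    have h1 := h' (d * (x + 1) / 2) ⟨by nlinarith [hx.1], by nlinarith [hx.2]⟩
    have h2 : P.eval x = (4 / d) ^ (m + 1) *
        (d * (x + 1) / 2 * ∏ k, (d * (x + 1) / 2 - α k)) := by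
      have : ∀ k, d * (x + 1) / 2 - α k = (d / 2) * (x - (2 * α k / d - 1)) := by
        intro k; field_simp; ring
      simp only [this, Finset.prod_mul_distrib, P, M, Polynomial.eval_mul, Polynomial.eval_C,
        Polynomial.eval_sub, Polynomial.eval_X, Polynomial.eval_prod, Finset.prod_const,
        Finset.card_univ, Fintype.card_fin]
      have e : (2:ℝ) ^ (m+1) = (4 / d) ^ (m + 1) * (d / 2) ^ (m+1) := by
        rw [← mul_pow]; congr 1; field_simp; norm_num
      rw [e, pow_succ (d/2)]; ring
    rw [h2, abs_mul, abs_of_pos (by positivity)]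
    calc _ ≤ (4 / d) ^ (m + 1) * (d / 4) ^ (m + 1) := by gcongr
      _ = 1 := by rw [← mul_pow]; field_simp; simp

/-- comparison of a Blaschke factor with its circular projection -/
lemma factor_aux (a w : ℂ) (ha : ‖a‖ < 1) (hw : ‖w‖ < 1) :
    |‖w‖ - ‖a‖| ≤ ‖(w - a) / (1 - (starRingEnd ℂ) a * w)‖ := by
  have hne : 0 < ‖1 - (starRingEnd ℂ) a * w‖ := by
    rw [norm_pos_iff, sub_ne_zero]
    intro h
    have := congrArg norm h
    simp at this
    nlinarith [norm_nonneg a, norm_nonneg w]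
  rw [norm_div, le_div_iff₀ hne]
  refine abs_le_of_sq_le_sq' ?_ (norm_nonneg _) |>.2
  have hr := norm_nonneg w
  have hα := norm_nonneg a
  have e1 : ‖w - a‖ ^ 2 = ‖w‖ ^ 2 + ‖a‖ ^ 2 - 2 * (w.re * a.re + w.im * a.im) := by
    simp only [← Complex.normSq_eq_norm_sq, Complex.normSq_apply, sub_re, sub_im]; ring
  have e2 : ‖1 - (starRingEnd ℂ) a * w‖ ^ 2 =
      1 + ‖w‖ ^ 2 * ‖a‖ ^ 2 - 2 * (w.re * a.re + w.im * a.im) := by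
    simp only [← Complex.normSq_eq_norm_sq, Complex.normSq_apply, sub_re, sub_im, mul_re, mul_im,
      conj_re, conj_im, one_re, one_im]; ring
  have ht : w.re * a.re + w.im * a.im ≤ ‖w‖ * ‖a‖ := by
    have := Complex.re_le_norm (w * (starRingEnd ℂ) a)
    simpa using this
  rw [mul_pow, sq_abs, e1, e2]
  set r := ‖w‖
  set α := ‖a‖
  have h1 : 0 ≤ 1 - (r - α) ^ 2 := by nlinarith
  have h2 : 0 ≤ 1 - (1 - α * r) ^ 2 := by
    have : α * r ≤ 1 := by nlinarith
    nlinarith [mul_nonneg hα hr]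
  nlinarith [mul_nonneg (sub_nonneg.2 ht) h1, mul_nonneg (sq_nonneg (r - α)) h2]

/-- local connectedness of sublevel sets at a noncritical point -/
lemma local_aux (B : ℂ → ℂ) (q : ℂ) (s : ℝ) (hs : 0 < s) (hq : ‖q‖ < 1)
    (hB : AnalyticAt ℂ B q) (hd : deriv B q ≠ 0) (hqs : ‖B q‖ = s) :
    ∃ N ∈ nhds q, IsPreconnected (N ∩ {z | ‖z‖ < 1 ∧ ‖B z‖ < s}) ∧
      q ∈ closure {z | ‖z‖ < 1 ∧ ‖B z‖ < s} := by
  have hst : HasStrictDerivAt B (deriv B q) q := hB.hasStrictDerivAt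
  have hF := hst.hasStrictFDerivAt_equiv hd
  let e := hF.toOpenPartialHomeomorph B
  have he : (e : ℂ → ℂ) = B := hF.toOpenPartialHomeomorph_coe
  have hqsrc : q ∈ e.source := hF.mem_toOpenPartialHomeomorph_source
  have hqt : B q ∈ e.target := by rw [← he]; exact e.map_source hqsrc
  have hsymm : e.symm (B q) = q := by rw [← he]; exact e.left_inv hqsrc
  have hct : ContinuousAt e.symm (B q) := e.continuousAt_symm hqt
  have hev : ∀ᶠ y in nhds (B q), y ∈ e.target ∧ e.symm y ∈ Metric.ball (0:ℂ) 1 := by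
    refine Filter.Eventually.and (e.open_target.mem_nhds hqt) (hct.eventually_mem ?_)
    rw [hsymm]
    exact Metric.isOpen_ball.mem_nhds (by simpa using hq)
  obtain ⟨ε, hε, hball⟩ := Metric.eventually_nhds_iff_ball.1 hev
  have hqcl : B q ∈ closure (Metric.ball (0:ℂ) s) := by
    rw [closure_ball _ hs.ne']; simp [hqs]
  have key : ∀ y ∈ e.target, B (e.symm y) = y := fun y hy => by
    rw [← he]; exact e.right_inv hy
  refine ⟨e.symm '' Metric.ball (B q) ε, ?_, ?_, ?_⟩
  · have : e.symm '' Metric.ball (B q) ε ∈ nhds (e.symm (B q)) :=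
      e.symm.image_mem_nhds hqt (Metric.ball_mem_nhds _ hε)
    rwa [hsymm] at this
  · have : e.symm '' Metric.ball (B q) ε ∩ {z | ‖z‖ < 1 ∧ ‖B z‖ < s} =
        e.symm '' (Metric.ball (B q) ε ∩ Metric.ball 0 s) := by
      ext x
      constructor
      · rintro ⟨⟨y, hy, rfl⟩, h1, h2⟩
        rw [key y (hball y hy).1] at h2
        exact ⟨y, ⟨hy, by simpa using h2⟩, rfl⟩
      · rintro ⟨y, ⟨hy, h2⟩, rfl⟩
        refine ⟨⟨y, hy, rfl⟩, by simpa using (hball y hy).2, ?_⟩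
        rw [key y (hball y hy).1]; simpa using h2
    rw [this]
    refine IsPreconnected.image ?_ _ ?_
    · exact ((convex_ball _ _).inter (convex_ball _ _)).isPreconnected
    · exact e.continuousOn_symm.mono fun y hy => (hball y hy.1).1
  · rw [mem_closure_iff_nhds]
    intro t ht
    have h1 : ∀ᶠ y in nhds (B q), e.symm y ∈ t := hct.eventually_mem (by rwa [hsymm])
    obtain ⟨y, hy, hyb⟩ := mem_closure_iff_nhds.1 hqcl _ (h1.and hev)
    refine ⟨e.symm y, hy.1, by simpa using hy.2.2, ?_⟩
    rw [key y hy.2.1]; simpa using hyb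

def Usub (B : ℂ → ℂ) (s : ℝ) : Set ℂ := {z | ‖z‖ < 1 ∧ ‖B z‖ < s}

/-- `0` and `p` are joined inside the sublevel set by a compact connected set. -/
def Tj (B : ℂ → ℂ) (p : ℂ) (s : ℝ) : Prop :=
  ∃ C : Set ℂ, IsCompact C ∧ IsPreconnected C ∧ (0:ℂ) ∈ C ∧ p ∈ C ∧ C ⊆ Usub B s

lemma sep_aux {C O₁ O₂ : Set ℂ} {p : ℂ} (hC : IsPreconnected C) (h1 : IsOpen O₁) (h2 : IsOpen O₂)
    (hd : Disjoint O₁ O₂) (hsub : C ⊆ O₁ ∪ O₂) (h0C : (0:ℂ) ∈ C) (hpC : p ∈ C)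
    (h0 : (0:ℂ) ∈ O₁) (hp : p ∈ O₂) : False := by
  have := hC.subset_left_of_subset_union h1 h2 hd hsub ⟨0, h0C, h0⟩
  exact Set.disjoint_left.1 hd (this hpC) hp

lemma stepA {B : ℂ → ℂ} {p : ℂ} {s : ℝ} (hc : ContinuousOn B (Metric.closedBall 0 1))
    (h : Tj B p s) : ∃ s' < s, Tj B p s' := by
  obtain ⟨C, hC, hpre, h0, hp, hsub⟩ := h
  have hcC : ContinuousOn (fun z => ‖B z‖) C :=
    (hc.mono fun z hz => by simpa using (hsub hz).1.le).norm
  obtain ⟨x, hx, hmax⟩ := hC.exists_isMaxOn ⟨0, h0⟩ hcC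
  have hxs := (hsub hx).2
  refine ⟨(‖B x‖ + s) / 2, by linarith, C, hC, hpre, h0, hp, fun z hz => ⟨(hsub hz).1, ?_⟩⟩
  have : ‖B z‖ ≤ ‖B x‖ := hmax hz
  linarith

lemma cover_aux {B : ℂ → ℂ} {s : ℝ} (hc : ContinuousOn B (Metric.closedBall 0 1)) (hs1 : s < 1)
    {O : Set ℂ} (hO : IsOpen O) (hcov : ∀ z, ‖z‖ ≤ 1 → ‖B z‖ ≤ s → z ∈ O) :
    ∃ s', s < s' ∧ s' ≤ 1 ∧ Usub B s' ⊆ O := by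
  have hK : IsCompact (Metric.closedBall (0:ℂ) 1 \ O) := (isCompact_closedBall _ _).diff hO
  rcases (Metric.closedBall (0:ℂ) 1 \ O).eq_empty_or_nonempty with he | hne
  · refine ⟨1, hs1, le_rfl, fun z hz => ?_⟩
    by_contra hzO
    have : z ∈ Metric.closedBall (0:ℂ) 1 \ O := ⟨by simpa using hz.1.le, hzO⟩
    rw [he] at this; exact this
  · obtain ⟨x, hx, hmin⟩ := hK.exists_isMinOn hne ((hc.mono Set.sdiff_subset).norm)
    have hxs : s < ‖B x‖ := by
      by_contra hcon
      exact hx.2 (hcov x (by simpa using hx.1) (not_lt.1 hcon))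
    refine ⟨min ‖B x‖ 1, lt_min hxs hs1, min_le_right _ _, fun z hz => ?_⟩
    by_contra hzO
    have h1 : ‖B x‖ ≤ ‖B z‖ := hmin ⟨by simpa using hz.1.le, hzO⟩
    have h2 := hz.2.trans_le (min_le_left _ _)
    linarith

lemma stepB {B : ℂ → ℂ} {p : ℂ} {R s : ℝ} (hc : ContinuousOn B (Metric.closedBall 0 1))
    (han : ∀ z, ‖z‖ < 1 → AnalyticAt ℂ B z) (hbd : ∀ z, ‖z‖ = 1 → ‖B z‖ = 1) (h0 : B 0 = 0)
    (hR : 0 ≤ R) (hcrit : ∀ z, ‖z‖ < 1 → deriv B z = 0 → ‖B z‖ ≤ R) (hp : ‖p‖ < 1)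
    (hBp : ‖B p‖ ≤ R) (hRs : R < s) (hs1 : s < 1)
    (hT : ∀ s', s < s' → s' ≤ 1 → Tj B p s') : Tj B p s := by
  have hspos : 0 < s := hR.trans_lt hRs
  have hUo : IsOpen (Usub B s) := by
    have : Usub B s = Metric.ball 0 1 ∩ (fun z => ‖B z‖) ⁻¹' Set.Iio s := by
      ext z; simp [Usub]
    rw [this]
    exact ((hc.mono Metric.ball_subset_closedBall).norm).isOpen_inter_preimage
      Metric.isOpen_ball isOpen_Iio
  have h0U : (0:ℂ) ∈ Usub B s := ⟨by simp, by simpa [h0] using hspos⟩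
  have hpU : p ∈ Usub B s := ⟨hp, hBp.trans_lt hRs⟩
  set V := connectedComponentIn (Usub B s) 0 with hV
  have hVo : IsOpen V := hUo.connectedComponentIn
  have h0V : (0:ℂ) ∈ V := mem_connectedComponentIn h0U
  have hVU : V ⊆ Usub B s := connectedComponentIn_subset _ _
  by_cases hpV : p ∈ V
  · have hconn : IsConnected V := isConnected_connectedComponentIn_iff.2 h0U
    have hpc : IsPathConnected V := (hVo.isConnected_iff_isPathConnected).1 hconn
    obtain ⟨γ, hγ⟩ := hpc.joinedIn 0 h0V p hpV
    refine ⟨Set.range γ, isCompact_range γ.continuous, isPreconnected_range γ.continuous,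
      ⟨0, γ.source⟩, ⟨1, γ.target⟩, ?_⟩
    rintro _ ⟨t, rfl⟩
    exact hVU (hγ t)
  · exfalso
    set W := Usub B s \ V with hW
    have hWo : IsOpen W := by
      rw [isOpen_iff_mem_nhds]
      intro x hx
      have hxo : IsOpen (connectedComponentIn (Usub B s) x) := hUo.connectedComponentIn
      refine Filter.mem_of_superset (hxo.mem_nhds (mem_connectedComponentIn hx.1)) fun y hy => ?_
      refine ⟨connectedComponentIn_subset _ _ hy, fun hyV => hx.2 ?_⟩
      have e1 := connectedComponentIn_eq hy
      have e2 := connectedComponentIn_eq hyV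
      rw [hV, e2, ← e1]
      exact mem_connectedComponentIn hx.1
    have hdisj : Disjoint V W := Set.disjoint_sdiff_right
    have hVW : V ∪ W = Usub B s := Set.union_sdiff_cancel hVU
    have hKc : IsClosed (Metric.closedBall (0:ℂ) 1 ∩ (fun z => ‖B z‖) ⁻¹' Set.Iic s) :=
      hc.norm.preimage_isClosed_of_isClosed Metric.isClosed_closedBall isClosed_Iic
    have hUK : closure (Usub B s) ⊆ Metric.closedBall (0:ℂ) 1 ∩ (fun z => ‖B z‖) ⁻¹' Set.Iic s :=
      closure_minimal (fun z hz => ⟨by simpa using hz.1.le, hz.2.le⟩) hKc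
    have hlt : ∀ q, ‖q‖ ≤ 1 → ‖B q‖ ≤ s → ‖q‖ < 1 := by
      intro q h1 h2
      refine lt_of_le_of_ne h1 fun h => ?_
      rw [hbd q h] at h2; linarith
    have hloc : ∀ q, ‖q‖ ≤ 1 → ‖B q‖ = s → ∃ N ∈ nhds q, IsPreconnected (N ∩ Usub B s) ∧
        q ∈ closure (Usub B s) := by
      intro q h1 h2
      have h3 := hlt q h1 h2.le
      refine local_aux B q s hspos h3 (han q h3) (fun hd => ?_) h2
      have := hcrit q h3 hd
      linarith
    have hcl : Disjoint (closure V) (closure W) := by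
      rw [Set.disjoint_left]
      intro q hqV hqW
      have hq := hUK (closure_mono hVU hqV)
      have hq1 : ‖q‖ ≤ 1 := by simpa using hq.1
      have hq2 : ‖B q‖ ≤ s := hq.2
      rcases hq2.lt_or_eq with h | h
      · have : q ∈ V ∪ W := by rw [hVW]; exact ⟨hlt q hq1 hq2, h⟩
        rcases this with h | h
        · exact Set.disjoint_left.1 (hdisj.closure_right hVo) h hqW
        · exact Set.disjoint_left.1 (hdisj.closure_left hWo) hqV h
      · obtain ⟨N, hN, hpre, -⟩ := hloc q hq1 h
        obtain ⟨v, hvN, hv⟩ := mem_closure_iff_nhds.1 hqV N hN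
        obtain ⟨w, hwN, hw⟩ := mem_closure_iff_nhds.1 hqW N hN
        have hne : ((N ∩ Usub B s) ∩ V).Nonempty := ⟨v, ⟨hvN, hVU hv⟩, hv⟩
        have := hpre.subset_left_of_subset_union hVo hWo hdisj
          (by rw [hVW]; exact Set.inter_subset_right) hne
        have hwU : w ∈ N ∩ Usub B s := ⟨hwN, hw.1⟩
        exact Set.disjoint_left.1 hdisj (this hwU) hw
    have hcomp : ∀ X ⊆ Usub B s, IsCompact (closure X) := fun X hX =>
      (isCompact_closedBall (0:ℂ) 1).of_isClosed_subset isClosed_closure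
        (((closure_mono hX).trans hUK).trans Set.inter_subset_left)
    obtain ⟨O₁, O₂, hO₁, hO₂, h1, h2, hd⟩ := SeparatedNhds.of_isCompact_isCompact
      (hcomp V hVU) (hcomp W Set.sdiff_subset) hcl
    obtain ⟨s', hs', hs'1, hsub⟩ := cover_aux hc hs1 (hO₁.union hO₂) (by
      intro q h3 h4
      have : q ∈ closure (V ∪ W) := by
        rw [hVW]
        rcases h4.lt_or_eq with h | h
        · exact subset_closure ⟨hlt q h3 h4, h⟩
        · exact (hloc q h3 h).choose_spec.2.2
      rw [closure_union] at this
      exact Set.union_subset_union h1 h2 this)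
    obtain ⟨C, -, hpre, h0C, hpC, hCs⟩ := hT s' hs' hs'1
    exact sep_aux hpre hO₁ hO₂ hd (hCs.trans hsub) h0C hpC (h1 (subset_closure h0V))
      (h2 (subset_closure ⟨hpU, hpV⟩))

lemma topo_aux {B : ℂ → ℂ} {p : ℂ} {R r : ℝ} (hc : ContinuousOn B (Metric.closedBall 0 1))
    (han : ∀ z, ‖z‖ < 1 → AnalyticAt ℂ B z) (hbd : ∀ z, ‖z‖ = 1 → ‖B z‖ = 1) (h0 : B 0 = 0)
    (hin : ∀ z, ‖z‖ < 1 → ‖B z‖ < 1)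
    (hR : 0 ≤ R) (hR1 : R < 1) (hcrit : ∀ z, ‖z‖ < 1 → deriv B z = 0 → ‖B z‖ ≤ R) (hp : ‖p‖ < 1)
    (hBp : ‖B p‖ ≤ R) (hr : 0 ≤ r) (hrp : r < ‖p‖) : ∃ z, ‖z‖ = r ∧ ‖B z‖ ≤ R := by
  by_contra hcon
  push Not at hcon
  have hO₁ : IsOpen {z : ℂ | ‖z‖ < r} := isOpen_lt continuous_norm continuous_const
  have hO₂ : IsOpen {z : ℂ | r < ‖z‖} := isOpen_lt continuous_const continuous_norm
  have hr0 : 0 < r := by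
    refine lt_of_le_of_ne hr fun h => ?_
    have := hcon 0 (by simpa using h)
    rw [h0] at this; simp at this; linarith
  obtain ⟨s₁, hs₁, hs₁1, hsub⟩ := cover_aux hc hR1 (hO₁.union hO₂) (by
    intro q _ h2
    rcases lt_trichotomy ‖q‖ r with h | h | h
    · exact Or.inl h
    · exact absurd (hcon q h) (not_lt.2 h2)
    · exact Or.inr h)
  have hmono : ∀ s s', s ≤ s' → Tj B p s → Tj B p s' := by
    rintro s s' h ⟨C, a, b, c, d, e⟩
    exact ⟨C, a, b, c, d, e.trans fun z hz => ⟨hz.1, hz.2.trans_le h⟩⟩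
  have hlow : ∀ s, Tj B p s → s₁ ≤ s := by
    intro s hs
    by_contra hlt
    obtain ⟨C, -, hpre, h0C, hpC, hCs⟩ := hmono s s₁ (not_le.1 hlt).le hs
    refine sep_aux hpre hO₁ hO₂ ?_ (hCs.trans hsub) h0C hpC (by simpa using hr0) hrp
    rw [Set.disjoint_left]
    intro z h1 h2
    have h1' : ‖z‖ < r := h1
    have h2' : r < ‖z‖ := h2
    linarith
  have hT1 : Tj B p 1 := by
    refine ⟨segment ℝ 0 p, ?_, (convex_segment _ _).isPreconnected, left_mem_segment _ _ _,
      right_mem_segment _ _ _, fun z hz => ?_⟩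
    · rw [segment_eq_image_lineMap]
      exact isCompact_Icc.image (AffineMap.lineMap_continuous)
    · have : z ∈ Metric.ball (0:ℂ) 1 :=
        (convex_ball (0:ℂ) 1).segment_subset (by simp) (by simpa using hp) hz
      have h1 : ‖z‖ < 1 := by simpa using this
      exact ⟨h1, hin z h1⟩
  set s₀ := sInf {s | Tj B p s} with hs₀
  have hbdd : BddBelow {s | Tj B p s} := ⟨s₁, fun s hs => hlow s hs⟩
  have hne : {s | Tj B p s}.Nonempty := ⟨1, hT1⟩
  have hs₀1 : s₁ ≤ s₀ := le_csInf hne hlow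
  have hnot : ¬ Tj B p s₀ := fun h => by
    obtain ⟨s', h1, h2⟩ := stepA hc h
    exact absurd (csInf_le hbdd h2) (not_le.2 h1)
  have hlt1 : s₀ < 1 := lt_of_le_of_ne (csInf_le hbdd hT1) fun h => hnot (h ▸ hT1)
  refine hnot (stepB hc han hbd h0 hR hcrit hp hBp (hs₁.trans_le hs₀1) hlt1 fun s' h1 _ => ?_)
  obtain ⟨t, ht, hts⟩ := exists_lt_of_csInf_lt hne h1
  exact hmono t s' hts.le ht

theorem L_n_gt (n : ℕ) (hn : 2 ≤ n) (z : Fin (n - 1) → ℂ) (hz : ∀ k, ‖z k‖ < 1)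
    (B : ℂ → ℂ)
    (hB : B = fun w => w * ∏ k, (w - z k) / (1 - (starRingEnd ℂ) (z k) * w))
    (hB0 : deriv B 0 ≠ 0) :
    ∃ ζ : ℂ, ‖ζ‖ < 1 ∧ deriv B ζ = 0 ∧
      1 / 4 ^ n < ‖B ζ / (ζ * deriv B 0)‖ := by
  by_contra hcon
  push Not at hcon
  have hden : ∀ k w, ‖w‖ ≤ 1 → 1 - (starRingEnd ℂ) (z k) * w ≠ 0 := by
    intro k w hw h
    have := congrArg norm (sub_eq_zero.1 h)
    simp at this
    nlinarith [norm_nonneg (z k), hz k, norm_nonneg w]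
  have han : ∀ w, ‖w‖ ≤ 1 → AnalyticAt ℂ B w := by
    intro w hw
    rw [hB]
    refine analyticAt_id.mul (Finset.analyticAt_fun_prod _ fun k _ => ?_)
    exact (analyticAt_id.sub analyticAt_const).div
      (analyticAt_const.sub (analyticAt_const.mul analyticAt_id)) (hden k w hw)
  have hc : ContinuousOn B (Metric.closedBall 0 1) := fun w hw =>
    (han w (by simpa using hw)).continuousAt.continuousWithinAt
  have hB00 : B 0 = 0 := by simp [hB]
  have hnorm : ∀ w, ‖B w‖ = ‖w‖ * ∏ k, ‖(w - z k) / (1 - (starRingEnd ℂ) (z k) * w)‖ := by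
    intro w; rw [hB]; simp only [norm_mul, norm_prod]
  have hsq : ∀ k w, ‖1 - (starRingEnd ℂ) (z k) * w‖ ^ 2 - ‖w - z k‖ ^ 2 =
      (1 - ‖w‖ ^ 2) * (1 - ‖z k‖ ^ 2) := by
    intro k w
    simp only [← Complex.normSq_eq_norm_sq, Complex.normSq_apply, sub_re, sub_im, mul_re, mul_im,
      conj_re, conj_im, one_re, one_im]; ring
  have hbd : ∀ w, ‖w‖ = 1 → ‖B w‖ = 1 := by
    intro w hw
    rw [hnorm, hw, one_mul]
    refine Finset.prod_eq_one fun k _ => ?_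
    have h1 := hsq k w
    rw [hw] at h1
    have h2 : ‖1 - (starRingEnd ℂ) (z k) * w‖ = ‖w - z k‖ := by
      refine (sq_eq_sq₀ (norm_nonneg _) (norm_nonneg _)).1 ?_
      linarith
    rw [norm_div, ← h2, div_self (norm_ne_zero_iff.2 (hden k w hw.le))]
  have hin : ∀ w, ‖w‖ < 1 → ‖B w‖ < 1 := by
    intro w hw
    rw [hnorm]
    refine lt_of_le_of_lt (mul_le_of_le_one_right (norm_nonneg _) ?_) hw
    refine Finset.prod_le_one (fun k _ => norm_nonneg _) fun k _ => ?_
    rw [norm_div]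
    refine div_le_one_of_le₀ ?_ (norm_nonneg _)
    refine abs_le_of_sq_le_sq' ?_ (norm_nonneg _) |>.2
    have h1 := hsq k w
    have h2 : 0 ≤ (1 - ‖w‖ ^ 2) * (1 - ‖z k‖ ^ 2) := by
      apply mul_nonneg <;> nlinarith [norm_nonneg w, norm_nonneg (z k), hz k]
    linarith
  have hderiv : ‖deriv B 0‖ = ∏ k, ‖z k‖ := by
    have hG : DifferentiableAt ℂ (fun w => ∏ k, (w - z k) / (1 - (starRingEnd ℂ) (z k) * w)) 0 := by
      refine (Finset.analyticAt_fun_prod _ fun k _ => ?_).differentiableAt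
      exact (analyticAt_id.sub analyticAt_const).div
        (analyticAt_const.sub (analyticAt_const.mul analyticAt_id)) (hden k 0 (by simp))
    have := (hasDerivAt_id (0:ℂ)).mul hG.hasDerivAt
    have h2 : deriv B 0 = ∏ k, (-(z k)) := by
      rw [hB]
      refine this.deriv.trans ?_
      simp
    rw [h2, norm_prod]; simp
  have hpos : ∀ k, 0 < ‖z k‖ := by
    intro k
    refine lt_of_le_of_ne (norm_nonneg _) fun h => hB0 ?_
    rw [← norm_eq_zero, hderiv]
    exact Finset.prod_eq_zero (Finset.mem_univ k) h.symm
  -- the set of zeros and critical points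
  set A : Set ℂ := Set.range z ∪ {w | ‖w‖ < 1 ∧ deriv B w = 0} with hA
  have hA1 : ∀ w ∈ A, ‖w‖ < 1 := by
    rintro w (⟨k, rfl⟩ | h)
    · exact hz k
    · exact h.1
  have hbdd : BddAbove (norm '' A) := ⟨1, by rintro _ ⟨w, hw, rfl⟩; exact (hA1 w hw).le⟩
  set d := sSup (norm '' A) with hd
  have hle : ∀ w ∈ A, ‖w‖ ≤ d := fun w hw => le_csSup hbdd ⟨w, hw, rfl⟩
  let k0 : Fin (n - 1) := ⟨0, by omega⟩
  have hneA : (norm '' A).Nonempty := ⟨_, z k0, Or.inl ⟨k0, rfl⟩, rfl⟩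
  have hd0 : 0 < d := (hpos k0).trans_le (hle _ (Or.inl ⟨k0, rfl⟩))
  have hd1 : d ≤ 1 := csSup_le hneA (by rintro _ ⟨w, hw, rfl⟩; exact (hA1 w hw).le)
  have hnn : n - 1 + 1 = n := by omega
  set R := (d / 4) ^ (n - 1 + 1) with hRdef
  have hR0 : 0 ≤ R := by positivity
  have hR1 : R < 1 := pow_lt_one₀ (by positivity) (by linarith) (by omega)
  have hcrit : ∀ w, ‖w‖ < 1 → deriv B w = 0 → ‖B w‖ ≤ R := by
    intro w hw hdw
    have h1 := hcon w hw hdw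
    have hw0 : w ≠ 0 := by rintro rfl; exact hB0 hdw
    rw [norm_div, norm_mul, div_le_iff₀ (mul_pos (norm_pos_iff.2 hw0) (norm_pos_iff.2 hB0)),
      hderiv] at h1
    have h2 : ∏ k, ‖z k‖ ≤ d ^ (n - 1) := by
      calc ∏ k, ‖z k‖ ≤ ∏ _k : Fin (n - 1), d :=
            Finset.prod_le_prod (fun k _ => norm_nonneg _) fun k _ => hle _ (Or.inl ⟨k, rfl⟩)
        _ = d ^ (n - 1) := by simp
    have h3 : ‖w‖ ≤ d := hle w (Or.inr ⟨hw, hdw⟩)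
    calc ‖B w‖ ≤ 1 / 4 ^ n * (‖w‖ * ∏ k, ‖z k‖) := h1
      _ ≤ 1 / 4 ^ n * (d * d ^ (n - 1)) := by
        gcongr
      _ = R := by
        rw [hRdef, div_pow, hnn, ← pow_succ', hnn]; ring
  have hAR : ∀ w ∈ A, ‖B w‖ ≤ R := by
    rintro w (⟨k, rfl⟩ | h)
    · rw [hnorm, Finset.prod_eq_zero (Finset.mem_univ k) (by simp), mul_zero]; exact hR0
    · exact hcrit w h.1 h.2
  refine cheb_aux (n - 1) (fun k => ‖z k‖) d hd0 fun r hr hrd => ?_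
  obtain ⟨_, ⟨p, hp, rfl⟩, hrp⟩ := exists_lt_of_lt_csSup hneA hrd
  obtain ⟨w, hw, hBw⟩ := topo_aux hc (fun w hw => han w hw.le) hbd hB00 hin hR0 hR1 hcrit
    (hA1 p hp) (hAR p hp) hr hrp
  refine le_trans ?_ hBw
  rw [hnorm, abs_mul, Finset.abs_prod, hw, abs_of_nonneg hr]
  refine mul_le_mul_of_nonneg_left (Finset.prod_le_prod (fun k _ => abs_nonneg _) fun k _ => ?_) hr
  rw [← hw]
  exact factor_aux (z k) w (hz k) (by rw [hw]; linarith)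
end

section
/- N_n ≥ L_n for all n ≥ 2: if C > 0 is such that every finite Blaschke product B of degree n with B(0)=0, B'(0)≠0 has a critical point c in D with |B(c)/(c B'(0))| ≥ C, then every monic polynomial P of degree n with P(0) = 0 and P'(0) ≠ 0 has a critical point c with |P(c)/(c P'(0))| ≥ C. -/
open Complex Polynomial

lemma aux_den_ne {z c : ℂ} (hz : ‖z‖ < 1) (hc : ‖c‖ < 1) :
    1 - (starRingEnd ℂ) z * c ≠ 0 := by
  intro h
  have h1 : (starRingEnd ℂ) z * c = 1 := (sub_eq_zero.mp h).symm
  have h2 : ‖z‖ * ‖c‖ = 1 := by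
    have := congrArg norm h1
    simpa using this
  nlinarith [norm_nonneg z, norm_nonneg c]

lemma aux_factor {z c : ℂ} (h : 1 - (starRingEnd ℂ) z * c ≠ 0) :
    HasDerivAt (fun w : ℂ => (w - z) / (1 - (starRingEnd ℂ) z * w))
      ((1 - (starRingEnd ℂ) z * z) / (1 - (starRingEnd ℂ) z * c) ^ 2) c := by
  have h1 : HasDerivAt (fun w : ℂ => w - z) 1 c := (hasDerivAt_id c).sub_const z
  have h2 : HasDerivAt (fun w : ℂ => 1 - (starRingEnd ℂ) z * w) (-((starRingEnd ℂ) z * 1)) c :=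
    ((hasDerivAt_id c).const_mul ((starRingEnd ℂ) z)).const_sub 1
  have h3 := h1.fun_div h2 h
  have e : (1 * (1 - (starRingEnd ℂ) z * c) - (c - z) * (-((starRingEnd ℂ) z * 1)))
      = 1 - (starRingEnd ℂ) z * z := by ring
  rw [e] at h3
  exact h3

lemma aux_deriv {N : ℕ} (z : Fin N → ℂ) (c : ℂ)
    (h : ∀ k, 1 - (starRingEnd ℂ) (z k) * c ≠ 0) :
    HasDerivAt (fun w => w * ∏ k, (w - z k) / (1 - (starRingEnd ℂ) (z k) * w))
      (∏ k, (c - z k) / (1 - (starRingEnd ℂ) (z k) * c) +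
        c * ∑ i, (∏ j ∈ Finset.univ.erase i, (c - z j) / (1 - (starRingEnd ℂ) (z j) * c)) *
          ((1 - (starRingEnd ℂ) (z i) * z i) / (1 - (starRingEnd ℂ) (z i) * c) ^ 2)) c := by
  have h1 := HasDerivAt.fun_finsetProd (u := Finset.univ) (fun k _ => aux_factor (h k))
  have h2 := (hasDerivAt_id' c).fun_mul h1
  simpa only [smul_eq_mul, one_mul] using h2

lemma aux_re {z c : ℂ} (hz : ‖z‖ < ‖c‖) (hc : ‖c‖ < 1) :
    0 ≤ (c * ((1 - (starRingEnd ℂ) z * z) / ((c - z) * (1 - (starRingEnd ℂ) z * c)))).re := by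
  set r := ‖c‖ with hr
  set p := ‖z‖ with hp
  have hp0 : 0 ≤ p := norm_nonneg z
  have e1 : (starRingEnd ℂ) z * z = ((p ^ 2 : ℝ) : ℂ) := by
    rw [← Complex.normSq_eq_conj_mul_self, Complex.normSq_eq_norm_sq]
  have e2 : c * ((1 - (starRingEnd ℂ) z * z) / ((c - z) * (1 - (starRingEnd ℂ) z * c)))
      = (((1 - p ^ 2) / Complex.normSq ((c - z) * (1 - (starRingEnd ℂ) z * c)) : ℝ) : ℂ) *
        (c * (starRingEnd ℂ) ((c - z) * (1 - (starRingEnd ℂ) z * c))) := by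
    rw [e1, div_eq_mul_inv, Complex.inv_def]
    push_cast
    ring
  rw [e2, Complex.re_ofReal_mul]
  apply mul_nonneg
  · apply div_nonneg _ (Complex.normSq_nonneg _)
    nlinarith
  · have hc2 : r ^ 2 = c.re ^ 2 + c.im ^ 2 := by
      rw [hr, ← Complex.normSq_eq_norm_sq, Complex.normSq_apply]; ring
    have hz2 : p ^ 2 = z.re ^ 2 + z.im ^ 2 := by
      rw [hp, ← Complex.normSq_eq_norm_sq, Complex.normSq_apply]; ring
    have hcs : (c * (starRingEnd ℂ) z).re ≤ r * p := by
      refine (Complex.re_le_norm _).trans ?_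
      simp [hr, hp]
    have e3 : (c * (starRingEnd ℂ) ((c - z) * (1 - (starRingEnd ℂ) z * c))).re
        = r ^ 2 * (1 + p ^ 2) - (1 + r ^ 2) * (c * (starRingEnd ℂ) z).re := by
      rw [hc2, hz2]
      simp
      ring
    rw [e3]
    have : 0 ≤ r * ((r - p) * (1 - r * p)) := by
      apply mul_nonneg (by linarith)
      apply mul_nonneg (by linarith)
      nlinarith
    nlinarith [sq_nonneg r]

lemma aux_bound {N : ℕ} (z : Fin N → ℂ) (c : ℂ) (hc : ‖c‖ < 1) (hz : ∀ k, ‖z k‖ < ‖c‖) :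
    ∏ k, (c - z k) / (1 - (starRingEnd ℂ) (z k) * c) +
        c * ∑ i, (∏ j ∈ Finset.univ.erase i, (c - z j) / (1 - (starRingEnd ℂ) (z j) * c)) *
          ((1 - (starRingEnd ℂ) (z i) * z i) / (1 - (starRingEnd ℂ) (z i) * c) ^ 2) ≠ 0 := by
  have hd : ∀ k, 1 - (starRingEnd ℂ) (z k) * c ≠ 0 := fun k => aux_den_ne ((hz k).trans hc) hc
  have hn : ∀ k, c - z k ≠ 0 := by
    intro k h
    have := hz k
    rw [← sub_eq_zero.mp h] at this
    exact lt_irrefl _ this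
  have hp : ∏ k, (c - z k) / (1 - (starRingEnd ℂ) (z k) * c) ≠ 0 :=
    Finset.prod_ne_zero_iff.mpr fun k _ => div_ne_zero (hn k) (hd k)
  have key : ∏ k, (c - z k) / (1 - (starRingEnd ℂ) (z k) * c) +
        c * ∑ i, (∏ j ∈ Finset.univ.erase i, (c - z j) / (1 - (starRingEnd ℂ) (z j) * c)) *
          ((1 - (starRingEnd ℂ) (z i) * z i) / (1 - (starRingEnd ℂ) (z i) * c) ^ 2)
      = (∏ k, (c - z k) / (1 - (starRingEnd ℂ) (z k) * c)) *
        (1 + ∑ i, c * ((1 - (starRingEnd ℂ) (z i) * z i) /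
          ((c - z i) * (1 - (starRingEnd ℂ) (z i) * c)))) := by
    rw [mul_add, mul_one, Finset.mul_sum, Finset.mul_sum]
    congr 1
    apply Finset.sum_congr rfl
    intro i _
    rw [← Finset.mul_prod_erase Finset.univ _ (Finset.mem_univ i)]
    have := hd i
    have := hn i
    field_simp
  rw [key]
  apply mul_ne_zero hp
  intro h
  have h2 := congrArg Complex.re h
  rw [Complex.add_re, Complex.re_sum] at h2
  have h3 : 0 ≤ ∑ i, (c * ((1 - (starRingEnd ℂ) (z i) * z i) /
          ((c - z i) * (1 - (starRingEnd ℂ) (z i) * c)))).re :=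
    Finset.sum_nonneg fun i _ => aux_re (hz i) hc
  simp only [Complex.one_re, Complex.zero_re] at h2
  linarith

lemma aux_split (N : ℕ) (P : Polynomial ℂ) (hP : P.Monic) (hd : P.natDegree = N + 1)
    (h0 : P.eval 0 = 0) : ∃ a : Fin N → ℂ, P = X * ∏ k, (X - Polynomial.C (a k)) := by
  have hX : X ∣ P := Polynomial.X_dvd_iff.mpr (by rwa [Polynomial.coeff_zero_eq_eval_zero])
  obtain ⟨Q, rfl⟩ := hX
  have hQ : Q.Monic := Polynomial.Monic.of_mul_monic_left Polynomial.monic_X hP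
  have hQd : Q.natDegree = N := by
    rw [Polynomial.natDegree_X_mul hQ.ne_zero] at hd
    omega
  have hs := IsAlgClosed.splits Q
  have hprod : (Q.roots.map fun b => X - Polynomial.C b).prod = Q :=
    (hs.eq_prod_roots_of_monic hQ).symm
  have hcard : Q.roots.card = N := by rw [← hs.natDegree_eq_card_roots, hQd]
  revert hprod hcard
  generalize Q.roots = m
  induction m using Quotient.inductionOn with
  | h l =>
    intro hprod hcard
    have hl : l.length = N := by simpa using hcard
    subst hl
    refine ⟨l.get, ?_⟩
    congr 1
    rw [← hprod]
    simp [← List.prod_ofFn]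
    congr 1
    apply List.ext_get <;> simp

theorem aux_main (N : ℕ) (C : ℝ)
    (hblaschke : ∀ (z : Fin N → ℂ), (∀ k, ‖z k‖ < 1) →
      ∀ B : ℂ → ℂ,
        B = (fun w => w * ∏ k, (w - z k) / (1 - (starRingEnd ℂ) (z k) * w)) →
        deriv B 0 ≠ 0 →
        ∃ c : ℂ, ‖c‖ < 1 ∧ deriv B c = 0 ∧ C ≤ ‖B c / (c * deriv B 0)‖)
    (a : Fin N → ℂ) (ha : ∀ k, a k ≠ 0) :
    ∃ w : ℂ, ∏ k, (w - a k) + w * ∑ i, ∏ j ∈ Finset.univ.erase i, (w - a j) = 0 ∧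
      C ≤ ‖(∏ k, (w - a k)) / ∏ k, (- a k)‖ := by
  obtain ⟨R, hR0, hR⟩ : ∃ R : ℝ, 0 ≤ R ∧ ∀ k, ‖a k‖ ≤ R :=
    ⟨∑ k, ‖a k‖, Finset.sum_nonneg fun _ _ => norm_nonneg _,
      fun k => Finset.single_le_sum (f := fun k => ‖a k‖) (fun _ _ => norm_nonneg _)
        (Finset.mem_univ k)⟩
  -- the scaled quantities
  let g : Fin N → ℝ × ℂ → ℂ := fun k q =>
    (q.2 - a k) / (1 - (starRingEnd ℂ) (q.1 * a k) * (q.1 * q.2))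
  let h : Fin N → ℝ × ℂ → ℂ := fun k q =>
    (1 - (starRingEnd ℂ) (q.1 * a k) * (q.1 * a k)) /
      (1 - (starRingEnd ℂ) (q.1 * a k) * (q.1 * q.2)) ^ 2
  let E : ℝ × ℂ → ℂ := fun q =>
    ∏ k, g k q + q.2 * ∑ i, (∏ j ∈ Finset.univ.erase i, g j q) * h i q
  let G : ℝ × ℂ → ℂ := fun q => (∏ k, g k q) / ∏ k, (- a k)
  have step : ∀ s : ℝ, 0 < s → s * (R + 1) ≤ 1 →
      ∃ w : ℂ, ‖w‖ ≤ R ∧ E (s, w) = 0 ∧ C ≤ ‖G (s, w)‖ := by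
    intro s hs hsR
    have hsc : (s : ℂ) ≠ 0 := by exact_mod_cast hs.ne'
    have hnz : ∀ k, ‖(s : ℂ) * a k‖ ≤ s * R := by
      intro k
      rw [norm_mul, Complex.norm_real, Real.norm_of_nonneg hs.le]
      exact mul_le_mul_of_nonneg_left (hR k) hs.le
    have hnz1 : ∀ k, ‖(s : ℂ) * a k‖ < 1 := fun k => by
      have := hnz k
      nlinarith
    have hder := fun (c : ℂ) (hc : ‖c‖ < 1) =>
      (aux_deriv (fun k => (s : ℂ) * a k) c (fun k => aux_den_ne (hnz1 k) hc)).deriv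
    have hder0 := hder 0 (by simp)
    simp only [mul_zero, sub_zero, div_one, zero_sub, zero_mul, add_zero] at hder0
    have hne0 : ∏ k, (-((s : ℂ) * a k)) ≠ 0 :=
      Finset.prod_ne_zero_iff.mpr fun k _ => neg_ne_zero.mpr (mul_ne_zero hsc (ha k))
    obtain ⟨c, hc1, hc2, hc3⟩ := hblaschke (fun k => (s : ℂ) * a k) hnz1 _ rfl
      (by rw [hder0]; exact hne0)
    rw [hder0] at hc3
    have hc0 : c ≠ 0 := by
      rintro rfl
      rw [hder0] at hc2
      exact hne0 hc2
    rw [hder c hc1] at hc2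
    have hcR : ‖c‖ ≤ s * R := by
      by_contra! hlt
      exact aux_bound _ c hc1 (fun k => (hnz k).trans_lt hlt) hc2
    obtain ⟨w, rfl⟩ : ∃ w, c = s * w := ⟨c / s, by field_simp⟩
    have hg : ∀ k, ((s : ℂ) * w - s * a k) /
        (1 - (starRingEnd ℂ) (s * a k) * (s * w)) = s * g k (s, w) := by
      intro k
      simp only [g]
      rw [← mul_sub, mul_div_assoc]
    have hh : ∀ k, (1 - (starRingEnd ℂ) (s * a k) * (s * a k)) /
        (1 - (starRingEnd ℂ) (s * a k) * (s * w)) ^ 2 = h k (s, w) := fun k => rfl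
    simp only [hg, hh] at hc2 hc3
    refine ⟨w, ?_, ?_, ?_⟩
    · rw [norm_mul, Complex.norm_real, Real.norm_of_nonneg hs.le] at hcR
      exact le_of_mul_le_mul_left hcR hs
    · have e : (s : ℂ) ^ N * E (s, w) = 0 := by
        rw [← hc2]
        simp only [E, Finset.prod_mul_distrib, Finset.prod_const, Finset.card_univ,
          Fintype.card_fin, mul_add]
        congr 1
        simp only [Finset.mul_sum]
        apply Finset.sum_congr rfl
        intro i _
        rw [Finset.card_erase_of_mem (Finset.mem_univ i), Finset.card_univ, Fintype.card_fin]
        have hN : N = N - 1 + 1 := by have := i.2; omega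
        have : (s : ℂ) ^ N = s ^ (N - 1) * s := by
          conv_lhs => rw [hN, pow_succ]
        rw [this]
        ring
      exact (mul_eq_zero.mp e).resolve_left (pow_ne_zero _ hsc)
    · convert hc3 using 2
      simp only [G]
      have : ∏ k, (-((s : ℂ) * a k)) = s ^ N * ∏ k, (- a k) := by
        simp only [← mul_neg, Finset.prod_mul_distrib, Finset.prod_const, Finset.card_univ,
          Fintype.card_fin]
      rw [this, mul_div_mul_left _ _ hc0]
      simp only [Finset.prod_mul_distrib, Finset.prod_const, Finset.card_univ,
          Fintype.card_fin]
      rw [mul_div_mul_left _ _ (pow_ne_zero _ hsc)]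
  -- sequence
  let s : ℕ → ℝ := fun m => 1 / ((m : ℝ) + 1) * (1 / (R + 1))
  have hs0 : Filter.Tendsto s Filter.atTop (nhds 0) := by
    have := (tendsto_one_div_add_atTop_nhds_zero_nat (𝕜 := ℝ)).mul_const (1 / (R + 1))
    simpa [s] using this
  have hspos : ∀ m, 0 < s m := fun m => by positivity
  have hsR : ∀ m, s m * (R + 1) ≤ 1 := by
    intro m
    have : s m * (R + 1) = 1 / ((m : ℝ) + 1) := by
      simp only [s]; field_simp
    rw [this, div_le_one (by positivity)]
    have : (0 : ℝ) ≤ m := by positivity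
    linarith
  choose w hwR hwE hwG using fun m => step (s m) (hspos m) (hsR m)
  obtain ⟨w0, -, φ, hφ, hlim⟩ := (isCompact_closedBall (0 : ℂ) R).tendsto_subseq
    (x := w) (fun m => by simpa using hwR m)
  have hpair : Filter.Tendsto (fun m => (s (φ m), w (φ m))) Filter.atTop (nhds ((0 : ℝ), w0)) :=
    (hs0.comp hφ.tendsto_atTop).prodMk_nhds hlim
  have hgc : ∀ k, ContinuousAt (g k) ((0 : ℝ), w0) := by
    intro k
    apply ContinuousAt.div
    · fun_prop
    · have := Complex.continuous_conj
      have : Continuous fun q : ℝ × ℂ => (starRingEnd ℂ) ((q.1 : ℂ) * a k) :=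
        this.comp (by fun_prop)
      exact (by fun_prop : Continuous fun q : ℝ × ℂ =>
        1 - (starRingEnd ℂ) (q.1 * a k) * (q.1 * q.2)).continuousAt
    · simp
  have hhc : ∀ k, ContinuousAt (h k) ((0 : ℝ), w0) := by
    intro k
    have := Complex.continuous_conj
    have : Continuous fun q : ℝ × ℂ => (starRingEnd ℂ) ((q.1 : ℂ) * a k) :=
        this.comp (by fun_prop)
    apply ContinuousAt.div
    · exact (by fun_prop : Continuous fun q : ℝ × ℂ =>
        1 - (starRingEnd ℂ) (q.1 * a k) * (q.1 * a k)).continuousAt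
    · exact (by fun_prop : Continuous fun q : ℝ × ℂ =>
        (1 - (starRingEnd ℂ) (q.1 * a k) * (q.1 * q.2)) ^ 2).continuousAt
    · simp
  have hEc : ContinuousAt E ((0 : ℝ), w0) := by
    simp only [E]
    fun_prop
  have hGc : ContinuousAt G ((0 : ℝ), w0) := by
    simp only [G]
    fun_prop
  refine ⟨w0, ?_, ?_⟩
  · have h1 := hEc.tendsto.comp hpair
    have h2 : (E ∘ fun m => (s (φ m), w (φ m))) = fun _ => 0 := by
      funext m
      exact hwE (φ m)
    rw [h2] at h1
    have h3 := tendsto_nhds_unique h1 tendsto_const_nhds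
    simpa [E, g, h] using h3
  · have h1 := (hGc.tendsto.comp hpair).norm
    have h3 := ge_of_tendsto' h1 (fun m => hwG (φ m))
    simpa [G, g] using h3

/-- `N_n ≥ L_n`: a uniform lower bound `C` for the dual mean value quantity of
finite Blaschke products of degree `n` is also a lower bound for polynomials. -/
theorem N_n_ge_L_n (n : ℕ) (hn : 2 ≤ n) (C : ℝ) (hC : 0 < C)
    (hblaschke : ∀ (z : Fin (n - 1) → ℂ), (∀ k, ‖z k‖ < 1) →
      ∀ B : ℂ → ℂ,
        B = (fun w => w * ∏ k, (w - z k) / (1 - (starRingEnd ℂ) (z k) * w)) →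
        deriv B 0 ≠ 0 →
        ∃ c : ℂ, ‖c‖ < 1 ∧ deriv B c = 0 ∧ C ≤ ‖B c / (c * deriv B 0)‖) :
    ∀ P : Polynomial ℂ, P.Monic → P.natDegree = n → P.eval 0 = 0 →
      P.derivative.eval 0 ≠ 0 →
      ∃ c : ℂ, P.derivative.eval c = 0 ∧
        C ≤ ‖P.eval c / (c * P.derivative.eval 0)‖ := by
  intro P hP hd h0 h1
  obtain ⟨a, rfl⟩ := aux_split (n - 1) P hP (by omega) h0
  have hev : ∀ w : ℂ, (derivative (X * ∏ k, (X - Polynomial.C (a k)))).eval w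
      = ∏ k, (w - a k) + w * ∑ i, ∏ j ∈ Finset.univ.erase i, (w - a j) := by
    intro w
    simp [Polynomial.derivative_mul, Polynomial.derivative_prod_finset, Polynomial.eval_prod,
      Polynomial.eval_finsetSum]
  have hev0 := hev 0
  simp only [zero_sub, zero_mul, add_zero] at hev0
  have ha : ∀ k, a k ≠ 0 := by
    intro k
    rw [hev0] at h1
    exact neg_ne_zero.mp (Finset.prod_ne_zero_iff.mp h1 k (Finset.mem_univ k))
  obtain ⟨w, hw1, hw2⟩ := aux_main (n - 1) C hblaschke a ha
  have hw0 : w ≠ 0 := by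
    rintro rfl
    rw [← hev] at hw1
    exact h1 hw1
  refine ⟨w, by rw [hev, hw1], ?_⟩
  rw [hev0]
  simp only [Polynomial.eval_mul, Polynomial.eval_X, Polynomial.eval_prod, Polynomial.eval_sub,
    Polynomial.eval_C]
  rwa [mul_div_mul_left _ _ hw0]
end
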